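/- arXiv:math/0601226 — 4 statements merged into one kernel-verified Lean document; each statement's English description precedes it below -/
import Mathlib

section
/- Let X be a metric space of finite Nagata-Assouad dimension (i.e. there is an integer N ≥ 0 with dim_NA(X) ≤ N). Then for every integer n ≥ 0 the following are equivalent: (a) the sphere S^n is a Lipschitz extensor of X; (b) dim_NA(X) ≤ n. -/
/-- A metric space `E` is a Lipschitz extensor of `X` if there is `C > 0` such that for every
`λ > 0`, every `λ`-Lipschitz map `f : A → E` defined on a nonempty subset `A ⊆ X` extends to a
`(C·λ)`-Lipschitz map `X → E`. -/
def LipschitzExtensorOf (X E : Type*) [MetricSpace X] [MetricSpace E] : Prop :=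
  ∃ C : ℝ, 0 < C ∧ ∀ A : Set X, A.Nonempty → ∀ lam : ℝ, 0 < lam →
    ∀ f : A → E, (∀ a b : A, dist (f a) (f b) ≤ lam * dist (a : X) (b : X)) →
      ∃ g : X → E, (∀ a : A, g a = f a) ∧
        ∀ x y : X, dist (g x) (g y) ≤ C * lam * dist x y

/-- The Nagata-Assouad dimension of a metric space `X` is at most `n`: there is `C > 0` such
that for every `r > 0` there is a cover of `X` splitting into `n+1` families, each `r`-disjoint,
with all members of diameter at most `C·r`. -/
def NagataDimLE (X : Type*) [MetricSpace X] (n : ℕ) : Prop :=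
  ∃ C : ℝ, 0 < C ∧ ∀ r : ℝ, 0 < r →
    ∃ U : Fin (n + 1) → Set (Set X),
      (∀ x : X, ∃ i, ∃ V ∈ U i, x ∈ V) ∧
      (∀ i, ∀ V ∈ U i, ∀ W ∈ U i, V ≠ W → ∀ x ∈ V, ∀ y ∈ W, r < dist x y) ∧
      (∀ i, ∀ V ∈ U i, ∀ x ∈ V, ∀ y ∈ V, dist x y ≤ C * r)

namespace NagataAux

/-- Real-constant Lipschitz predicate. -/
def Lip {X E : Type*} [MetricSpace X] [NormedAddCommGroup E] (L : ℝ) (f : X → E) : Prop :=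
  ∀ x y, ‖f x - f y‖ ≤ L * dist x y

section basics
set_option linter.unusedSectionVars false
variable {X E : Type*} [MetricSpace X] [NormedAddCommGroup E] [NormedSpace ℝ E]

theorem Lip.add {K L : ℝ} {f g : X → E} (hf : Lip K f) (hg : Lip L g) :
    Lip (K + L) (fun x => f x + g x) := by
  intro x y
  have h : f x + g x - (f y + g y) = (f x - f y) + (g x - g y) := by abel
  rw [h, add_mul]
  exact (norm_add_le _ _).trans (add_le_add (hf x y) (hg x y))

theorem Lip.sub {K L : ℝ} {f g : X → E} (hf : Lip K f) (hg : Lip L g) :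
    Lip (K + L) (fun x => f x - g x) := by
  intro x y
  have h : f x - g x - (f y - g y) = (f x - f y) - (g x - g y) := by abel
  rw [h, add_mul]
  exact (norm_sub_le _ _).trans (add_le_add (hf x y) (hg x y))

theorem Lip.sum {ι : Type*} (s : Finset ι) {K : ℝ} {f : ι → X → E} (hf : ∀ i, Lip K (f i)) :
    Lip (s.card * K) (fun x => ∑ i ∈ s, f i x) := by
  intro x y
  rw [← Finset.sum_sub_distrib, mul_assoc, ← nsmul_eq_mul]
  exact (norm_sum_le _ _).trans (Finset.sum_le_card_nsmul _ _ _ fun i _ => hf i x y)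

theorem Lip.smul {a b K L : ℝ} {f : X → ℝ} {g : X → E} (hf : Lip K f) (hg : Lip L g)
    (ha : ∀ x, ‖f x‖ ≤ a) (hb : ∀ x, ‖g x‖ ≤ b) :
    Lip (a * L + K * b) (fun x => f x • g x) := by
  intro x y
  have h : f x • g x - f y • g y = f x • (g x - g y) + (f x - f y) • g y := by
    rw [smul_sub, sub_smul]; abel
  rw [h]
  refine (norm_add_le _ _).trans ?_
  rw [norm_smul, norm_smul]
  have h1 := mul_le_mul (ha x) (hg x y) (norm_nonneg _) ((norm_nonneg _).trans (ha x))
  have h2 := mul_le_mul (hf x y) (hb y) (norm_nonneg _) ((norm_nonneg _).trans (hf x y))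
  linarith

theorem Lip.mono {K L : ℝ} {f : X → E} (hf : Lip K f) (h : K ≤ L) : Lip L f := fun x y =>
  (hf x y).trans (mul_le_mul_of_nonneg_right h dist_nonneg)

theorem Lip.norm {K : ℝ} {f : X → E} (hf : Lip K f) : Lip K (fun x => ‖f x‖) := fun x y =>
  (abs_norm_sub_norm_le _ _).trans (hf x y)

/-- clamp to `[0,1]`. -/
noncomputable def clamp (t : ℝ) : ℝ := max 0 (min 1 t)

theorem clamp_abs_sub (s t : ℝ) : |clamp s - clamp t| ≤ |s - t| := by
  unfold clamp
  refine (abs_max_sub_max_le_max _ _ _ _).trans ?_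
  refine max_le (by simp) ((abs_min_sub_min_le_max _ _ _ _).trans (max_le (by simp) le_rfl))

theorem clamp_nonneg (t : ℝ) : 0 ≤ clamp t := le_max_left _ _
theorem clamp_le_one (t : ℝ) : clamp t ≤ 1 := max_le zero_le_one (min_le_left _ _)
theorem clamp_of_one_le {t : ℝ} (h : 1 ≤ t) : clamp t = 1 := by simp [clamp, h]
theorem clamp_of_nonpos {t : ℝ} (h : t ≤ 0) : clamp t = 0 := by
  simp [clamp, h]
theorem clamp_norm (t : ℝ) : ‖clamp t‖ ≤ 1 := by
  rw [Real.norm_eq_abs, abs_of_nonneg (clamp_nonneg t)]; exact clamp_le_one t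

theorem Lip.clamp_affine {K a b : ℝ} {f : X → ℝ} (hf : Lip K f) (ha : 0 ≤ a) :
    Lip (a * K) (fun x => clamp (a * f x - b)) := by
  intro x y
  refine (clamp_abs_sub _ _).trans ?_
  have : a * f x - b - (a * f y - b) = a * (f x - f y) := by ring
  rw [this, abs_mul, abs_of_nonneg ha, mul_assoc]
  exact mul_le_mul_of_nonneg_left (hf x y) ha

/-- truncated normalization. -/
noncomputable def rho (c : ℝ) (v : E) : E := (max c ‖v‖)⁻¹ • v

theorem rho_sub {c : ℝ} (hc : 0 < c) (v w : E) : ‖rho c v - rho c w‖ ≤ 2 / c * ‖v - w‖ := by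
  unfold rho
  set m := max c ‖v‖
  set k := max c ‖w‖
  have hm : c ≤ m := le_max_left _ _
  have hk : c ≤ k := le_max_left _ _
  have hw : ‖w‖ ≤ k := le_max_right _ _
  have hm0 : 0 < m := hc.trans_le hm
  have hk0 : 0 < k := hc.trans_le hk
  have hmk : |m - k| ≤ ‖v - w‖ := by
    refine (abs_max_sub_max_le_max _ _ _ _).trans (max_le (by simp) (abs_norm_sub_norm_le _ _))
  have h : m⁻¹ • v - k⁻¹ • w = m⁻¹ • (v - w) + (m⁻¹ - k⁻¹) • w := by
    rw [smul_sub, sub_smul]; abel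
  rw [h]
  refine (norm_add_le _ _).trans ?_
  rw [norm_smul, norm_smul, Real.norm_eq_abs, Real.norm_eq_abs, abs_of_pos (inv_pos.2 hm0)]
  have e1 : m⁻¹ * ‖v - w‖ ≤ c⁻¹ * ‖v - w‖ :=
    mul_le_mul_of_nonneg_right (inv_anti₀ hc hm) (norm_nonneg _)
  have e2 : |m⁻¹ - k⁻¹| * ‖w‖ ≤ c⁻¹ * ‖v - w‖ := by
    have : m⁻¹ - k⁻¹ = m⁻¹ * k⁻¹ * (k - m) := by field_simp
    rw [this, abs_mul, abs_of_pos (by positivity), abs_sub_comm]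
    calc m⁻¹ * k⁻¹ * |m - k| * ‖w‖ = m⁻¹ * |m - k| * (k⁻¹ * ‖w‖) := by ring
      _ ≤ m⁻¹ * |m - k| * 1 := by
        refine mul_le_mul_of_nonneg_left ?_ (by positivity)
        rw [inv_mul_le_iff₀ hk0]; simpa using hw
      _ = m⁻¹ * |m - k| := mul_one _
      _ ≤ c⁻¹ * ‖v - w‖ := mul_le_mul (inv_anti₀ hc hm) hmk (abs_nonneg _) (by positivity)
  calc _ ≤ c⁻¹ * ‖v - w‖ + c⁻¹ * ‖v - w‖ := add_le_add e1 e2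
    _ = _ := by ring

theorem rho_norm_eq_one {c : ℝ} (hc : 0 < c) {v : E} (hv : c ≤ ‖v‖) : ‖rho c v‖ = 1 := by
  unfold rho
  rw [max_eq_right hv, norm_smul, norm_inv, norm_norm]
  exact inv_mul_cancel₀ (hc.trans_le hv).ne'

theorem rho_norm_le {c : ℝ} (hc : 0 < c) (v : E) : ‖rho c v‖ ≤ 1 := by
  unfold rho
  have : 0 < max c ‖v‖ := lt_max_of_lt_left hc
  rw [norm_smul, norm_inv, Real.norm_eq_abs, abs_of_pos this, inv_mul_le_iff₀ this]
  simp

theorem rho_of_norm_one {c : ℝ} (hc : c ≤ 1) {v : E} (hv : ‖v‖ = 1) : rho c v = v := by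
  unfold rho; rw [hv, max_eq_right hc]; simp

theorem Lip.rho {c K : ℝ} (hc : 0 < c) {f : X → E} (hf : Lip K f) :
    Lip (2 / c * K) (fun x => rho c (f x)) := fun x y => by
  refine (rho_sub hc _ _).trans ?_
  rw [mul_assoc]
  exact mul_le_mul_of_nonneg_left (hf x y) (by positivity)

theorem ballExt (X E : Type*) [MetricSpace X] [NormedAddCommGroup E] [NormedSpace ℝ E]
    [FiniteDimensional ℝ E] :
    ∃ L : ℝ, 0 < L ∧ ∀ A : Set X, ∀ lam : ℝ, 0 < lam → ∀ f : A → Metric.sphere (0 : E) 1,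
      (∀ a b : A, dist (f a) (f b) ≤ lam * dist (a : X) (b : X)) →
      ∃ F : X → E, (∀ x, ‖F x‖ ≤ 1) ∧ Lip (L * lam) F ∧ ∀ a : A, F a = f a := by
  classical
  refine ⟨2 * lipschitzExtensionConstant E,
    mul_pos two_pos (by exact_mod_cast lipschitzExtensionConstant_pos E), ?_⟩
  intro A lam hlam f hf
  let f' : X → E := fun x => if h : x ∈ A then (f ⟨x, h⟩ : E) else 0
  have hf' : LipschitzOnWith lam.toNNReal f' A := by
    refine LipschitzOnWith.of_dist_le_mul fun x hx y hy => ?_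
    simp only [f', hx, hy, dif_pos, Real.coe_toNNReal _ hlam.le]
    exact hf ⟨x, hx⟩ ⟨y, hy⟩
  obtain ⟨g, hg, hgf⟩ := hf'.extend_finite_dimension
  have hg' : Lip (lipschitzExtensionConstant E * lam) g := fun x y => by
    have := hg.dist_le_mul x y
    rw [dist_eq_norm] at this
    simpa [Real.coe_toNNReal _ hlam.le] using this
  refine ⟨fun x => NagataAux.rho 1 (g x), fun x => rho_norm_le one_pos _,
    (hg'.rho one_pos).mono (le_of_eq (by ring)), fun a => ?_⟩
  have h1 : g a = f a := by rw [← hgf a.2]; simp [f']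
  show NagataAux.rho 1 (g a) = f a
  rw [h1]
  exact rho_of_norm_one le_rfl (by simp)

end basics

/-- Colour functions with labels. -/
theorem label {X : Type*} [MetricSpace X] {n : ℕ} {C R : ℝ} (hR : 0 < R)
    (U : Fin (n + 1) → Set (Set X))
    (h1 : ∀ x : X, ∃ i, ∃ V ∈ U i, x ∈ V)
    (h2 : ∀ i, ∀ V ∈ U i, ∀ W ∈ U i, V ≠ W → ∀ x ∈ V, ∀ y ∈ W, R < dist x y)
    (h3 : ∀ i, ∀ V ∈ U i, ∀ x ∈ V, ∀ y ∈ V, dist x y ≤ C * R) :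
    ∃ (p : Fin (n + 1) → X → ℝ) (c : Fin (n + 1) → X → X),
      (∀ i x, 0 ≤ p i x) ∧ (∀ i x, p i x ≤ 1) ∧ (∀ i, Lip (4 / R) (p i)) ∧
      (∀ x, ∃ i, p i x = 1) ∧
      (∀ i x, 0 < p i x → dist x (c i x) ≤ (C + 1) * R) ∧
      (∀ i x y, 0 < p i x → 0 < p i y → dist x y ≤ R / 2 → c i x = c i y) := by
  classical
  let T : Fin (n + 1) → Set X := fun i => ⋃₀ U i
  let p : Fin (n + 1) → X → ℝ := fun i x =>
    if (T i).Nonempty then clamp ((4 / R) * (-Metric.infDist x (T i)) - (-1)) else 0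
  have hp : ∀ i x, 0 < p i x → ∃ W, W ∈ U i ∧ ∃ w ∈ W, dist x w < R / 4 := by
    intro i x hx
    by_cases hT : (T i).Nonempty
    · simp only [p, hT, if_true] at hx
      have : Metric.infDist x (T i) < R / 4 := by
        by_contra hcon
        push Not at hcon
        rw [clamp_of_nonpos] at hx
        · exact lt_irrefl _ hx
        · have : 4 / R * (R / 4) ≤ 4 / R * Metric.infDist x (T i) :=
            mul_le_mul_of_nonneg_left hcon (by positivity)
          have e : 4 / R * (R / 4) = 1 := by field_simp
          linarith
      obtain ⟨w, ⟨W, hW, hwW⟩, hd⟩ := (Metric.infDist_lt_iff hT).1 this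
      exact ⟨W, hW, w, hwW, hd⟩
    · simp [p, hT] at hx
  let lab : Fin (n + 1) → X → Set X := fun i x =>
    if h : 0 < p i x then (hp i x h).choose else ∅
  have hlab : ∀ i x, 0 < p i x → lab i x ∈ U i ∧ ∃ w ∈ lab i x, dist x w < R / 4 := by
    intro i x h
    simp only [lab, h, dif_pos]
    exact (hp i x h).choose_spec
  let c : Fin (n + 1) → X → X := fun i x =>
    if h : (lab i x).Nonempty then h.choose else x
  refine ⟨p, c, ?_, ?_, ?_, ?_, ?_, ?_⟩
  · intro i x; simp only [p]; split_ifs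
    exacts [clamp_nonneg _, le_rfl]
  · intro i x; simp only [p]; split_ifs
    exacts [clamp_le_one _, zero_le_one]
  · intro i
    by_cases hT : (T i).Nonempty
    · simp only [p, hT, if_true]
      have : Lip 1 (fun x => -Metric.infDist x (T i)) := by
        intro x y
        have := (Metric.lipschitz_infDist_pt (T i)).dist_le_mul x y
        rw [dist_eq_norm] at this
        rw [neg_sub_neg, norm_sub_rev]
        simpa using this
      exact (this.clamp_affine (by positivity)).mono (by simp)
    · intro x y
      simp only [p, hT, if_false, sub_self, norm_zero]
      positivity
  · intro x
    obtain ⟨i, V, hV, hx⟩ := h1 x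
    have hxT : x ∈ T i := ⟨V, hV, hx⟩
    refine ⟨i, ?_⟩
    have hT : (T i).Nonempty := ⟨x, hxT⟩
    simp only [p, hT, if_true, Metric.infDist_zero_of_mem hxT]
    exact clamp_of_one_le (by simp)
  · intro i x hx
    obtain ⟨hW, w, hw, hd⟩ := hlab i x hx
    have hne : (lab i x).Nonempty := ⟨w, hw⟩
    have hc : c i x ∈ lab i x := by
      simp only [c, hne, dif_pos]; exact hne.choose_spec
    have := h3 i _ hW w hw _ hc
    have := dist_triangle x w (c i x)
    linarith
  · intro i x y hx hy hxy
    obtain ⟨hW, w, hw, hd⟩ := hlab i x hx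
    obtain ⟨hW', w', hw', hd'⟩ := hlab i y hy
    have hl : lab i x = lab i y := by
      by_contra hne
      have h := h2 i _ hW _ hW' hne w hw w' hw'
      have t1 := dist_triangle w x w'
      have t2 := dist_triangle x y w'
      rw [dist_comm w x] at t1
      linarith
    have hne : (lab i x).Nonempty := ⟨w, hw⟩
    have hne' : (lab i y).Nonempty := ⟨w', hw'⟩
    simp only [c, hne, hne', dif_pos]
    simp only [hl]

theorem nagata_mono {X : Type*} [MetricSpace X] {m n : ℕ} (h : m ≤ n) (hm : NagataDimLE X m) :
    NagataDimLE X n := by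
  obtain ⟨C, hC, H⟩ := hm
  refine ⟨C, hC, fun r hr => ?_⟩
  obtain ⟨U, h1, h2, h3⟩ := H r hr
  refine ⟨fun i => if hi : (i : ℕ) < m + 1 then U ⟨i, hi⟩ else ∅, ?_, ?_, ?_⟩
  · intro x
    obtain ⟨i, V, hV, hx⟩ := h1 x
    refine ⟨⟨i, by omega⟩, V, ?_, hx⟩
    have hi : (i : ℕ) < m + 1 := i.2
    simp only [hi, dif_pos]
    exact hV
  · intro i V hV W hW
    by_cases hi : (i : ℕ) < m + 1
    · simp only [hi, dif_pos] at hV hW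
      exact h2 _ V hV W hW
    · simp [hi] at hV
  · intro i V hV
    by_cases hi : (i : ℕ) < m + 1
    · simp only [hi, dif_pos] at hV
      exact h3 _ V hV
    · simp [hi] at hV

/-- Gap lemma. -/
theorem gap {m : ℕ} (v : Fin m → ℝ) {g : ℝ} (hg : 0 < g) {a b : Fin m}
    (hab : v a + (m + 1) * g ≤ v b) :
    ∃ S : Finset (Fin m), S.Nonempty ∧ (∃ j, j ∉ S) ∧ ∀ i ∈ S, ∀ j ∉ S, v j + g ≤ v i := by
  classical
  let F : Fin m → ℤ := fun i => ⌊(v i - v a) / g⌋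
  have : ∃ k ∈ Finset.range (m + 1), (k : ℤ) ∉ Finset.univ.image F := by
    by_contra hcon
    push Not at hcon
    have hsub : (Finset.range (m + 1)).image (fun k : ℕ => (k : ℤ)) ⊆ Finset.univ.image F := by
      intro z hz
      obtain ⟨k, hk, rfl⟩ := Finset.mem_image.1 hz
      exact hcon k hk
    have := Finset.card_le_card hsub
    rw [Finset.card_image_of_injective _ Nat.cast_injective, Finset.card_range] at this
    have h2 := Finset.card_image_le (s := (Finset.univ : Finset (Fin m))) (f := F)
    simp only [Finset.card_univ, Fintype.card_fin] at h2
    omega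
  obtain ⟨k, hk, hkF⟩ := this
  have hk' : (k : ℝ) ≤ m := by
    have := Finset.mem_range.1 hk
    exact_mod_cast Nat.lt_succ_iff.1 this
  have hnot : ∀ i, v i < v a + (k + 1) * g → v i < v a + k * g := by
    intro i hi
    by_contra hcon
    push Not at hcon
    apply hkF
    refine Finset.mem_image.2 ⟨i, Finset.mem_univ _, ?_⟩
    simp only [F]
    rw [Int.floor_eq_iff]
    push_cast
    rw [le_div_iff₀ hg, div_lt_iff₀ hg]
    constructor <;> linarith
  refine ⟨Finset.univ.filter fun i => v a + (k + 1) * g ≤ v i, ⟨b, ?_⟩, ⟨a, ?_⟩, ?_⟩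
  · simp only [Finset.mem_filter, Finset.mem_univ, true_and]
    nlinarith
  · simp only [Finset.mem_filter, Finset.mem_univ, true_and, not_le]
    have : (0 : ℝ) ≤ k := Nat.cast_nonneg k
    nlinarith
  · intro i hi j hj
    simp only [Finset.mem_filter, Finset.mem_univ, true_and, not_le] at hi hj
    have := hnot j hj
    linarith

theorem genpos (n : ℕ) : ∃ (Q : EuclideanSpace ℝ (Fin (n + 1)) → EuclideanSpace ℝ (Fin (n + 1)))
    (z : EuclideanSpace ℝ (Fin (n + 1))) (δ : ℝ), 0 < δ ∧ ‖z‖ ≤ 1 / 16 ∧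
    (∀ v, ‖v‖ ≤ 1 → ‖Q v - v‖ ≤ 1 / 16 ∧ ‖Q v‖ ≤ 1) ∧
    ∀ s : Fin (n + 1) → EuclideanSpace ℝ (Fin (n + 1)), (∀ i, ‖s i‖ ≤ 1) →
      ∀ y ∈ convexHull ℝ (Set.range fun i => Q (s i)), δ ≤ ‖y - z‖ := by
  classical
  let E := EuclideanSpace ℝ (Fin (n + 1))
  obtain ⟨P, hPsub, hPfin, hPcov⟩ :=
    (isCompact_closedBall (0 : E) 1).finite_cover_balls (show (0 : ℝ) < 1 / 16 by norm_num)
  have hQ : ∀ v : E, ∃ q : E, ‖v‖ ≤ 1 → q ∈ P ∧ ‖q - v‖ ≤ 1 / 16 := by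
    intro v
    by_cases hv : ‖v‖ ≤ 1
    · have := hPcov (mem_closedBall_zero_iff.2 hv)
      simp only [Set.mem_iUnion, exists_prop] at this
      obtain ⟨q, hq, hd⟩ := this
      refine ⟨q, fun _ => ⟨hq, ?_⟩⟩
      rw [Metric.mem_ball, dist_comm, dist_eq_norm] at hd
      exact hd.le
    · exact ⟨0, fun h => absurd h hv⟩
  choose Q hQ using hQ
  have : Finite P := hPfin
  let D : Set E := ⋃ s : Fin (n + 1) → P, convexHull ℝ (Set.range fun i => (s i : E))
  have hDcl : IsClosed D := by
    refine isClosed_iUnion_of_finite fun s => ?_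
    exact ((Set.finite_range fun i => (s i : E)).isCompact_convexHull ℝ).isClosed
  have hDnull : MeasureTheory.volume D = 0 := by
    rw [MeasureTheory.measure_iUnion_null_iff]
    intro s
    refine MeasureTheory.measure_mono_null (convexHull_subset_affineSpan _) ?_
    refine MeasureTheory.Measure.addHaar_affineSubspace _ _ ?_
    intro htop
    have h1 := finrank_vectorSpan_range_le ℝ (fun i => (s i : E)) (n := n) (by simp)
    rw [← direction_affineSpan, htop, AffineSubspace.direction_top, finrank_top] at h1
    simp [E] at h1
  have hz : ∃ z ∈ Metric.ball (0 : E) (1 / 16), z ∉ D := by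
    by_contra hcon
    push Not at hcon
    have h0 := MeasureTheory.measure_mono_null (show Metric.ball (0 : E) (1 / 16) ⊆ D from hcon)
      hDnull
    have := Metric.measure_ball_pos (MeasureTheory.volume : MeasureTheory.Measure E) 0
      (show (0 : ℝ) < 1 / 16 by norm_num)
    rw [h0] at this
    exact lt_irrefl _ this
  obtain ⟨z, hzb, hzD⟩ := hz
  obtain ⟨δ, hδ, hδD⟩ := Metric.isOpen_iff.1 hDcl.isOpen_compl z hzD
  refine ⟨Q, z, δ, hδ, (mem_ball_zero_iff.1 hzb).le, fun v hv => ⟨(hQ v hv).2, ?_⟩, ?_⟩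
  · exact mem_closedBall_zero_iff.1 (hPsub (hQ v hv).1)
  · intro s hs y hy
    by_contra hcon
    push Not at hcon
    rw [← dist_eq_norm] at hcon
    refine hδD (Metric.mem_ball.2 hcon) (Set.mem_iUnion.2 ⟨fun i => ⟨Q (s i), (hQ _ (hs i)).1⟩, ?_⟩)
    exact hy

theorem extensor_of_nagata {X : Type*} [MetricSpace X] (n : ℕ) (h : NagataDimLE X n) :
    LipschitzExtensorOf X (Metric.sphere (0 : EuclideanSpace ℝ (Fin (n + 1))) 1) := by
  obtain ⟨C, hC, H⟩ := h
  obtain ⟨L, hL, hext⟩ := ballExt X (EuclideanSpace ℝ (Fin (n + 1)))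
  obtain ⟨Q, z, δ, hδ, hz, hQ, hQδ⟩ := genpos n
  let c : ℝ := min δ (1 / 4)
  have hc : 0 < c := lt_min hδ (by norm_num)
  have hc1 : c ≤ 1 / 4 := min_le_right _ _
  have hcδ : c ≤ δ := min_le_left _ _
  let B : ℝ := 64 * (n + 1) * (n + 2) * (L * (C + 1))
  refine ⟨2 / c * (2 * B + 2 * L), by positivity, ?_⟩
  intro A _ lam hlam f hf
  obtain ⟨F, hF1, hFL, hFA⟩ := hext A lam hlam f hf
  let R : ℝ := 1 / (16 * (L * lam) * (C + 1))
  have hR : 0 < R := by positivity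
  have hLR : L * lam * ((C + 1) * R) = 1 / 16 := by
    simp only [R]; field_simp
  obtain ⟨U, h1, h2, h3⟩ := H R hR
  obtain ⟨p, cc, hp0, hp1, hpL, hpx, hcd, hcc⟩ := label hR U h1 h2 h3
  let S : X → ℝ := fun x => ∑ i, p i x
  have hS1 : ∀ x, 1 ≤ S x := by
    intro x
    obtain ⟨i, hi⟩ := hpx x
    rw [← hi]
    exact Finset.single_le_sum (f := fun i => p i x) (fun j _ => hp0 j x) (Finset.mem_univ i)
  have hS0 : ∀ x, 0 < S x := fun x => zero_lt_one.trans_le (hS1 x)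
  have hSL : Lip ((n + 1) * (4 / R)) S := by
    have := Lip.sum (Finset.univ : Finset (Fin (n + 1))) hpL
    simpa using this
  let t : Fin (n + 1) → X → ℝ := fun i x => p i x / S x
  have ht0 : ∀ i x, 0 ≤ t i x := fun i x => div_nonneg (hp0 i x) (hS0 x).le
  have ht1 : ∀ i x, t i x ≤ 1 := fun i x => by
    simp only [t]; rw [div_le_one (hS0 x)]; exact (hp1 i x).trans (hS1 x)
  have htsum : ∀ x, ∑ i, t i x = 1 := fun x => by
    simp only [t]; rw [← Finset.sum_div]; exact div_self (hS0 x).ne'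
  have htL : ∀ i, Lip ((n + 2) * (4 / R)) (t i) := by
    intro i x y
    have hid : t i x - t i y = (p i x - p i y) / S x + p i y / S y * ((S y - S x) / S x) := by
      have := (hS0 x).ne'
      have := (hS0 y).ne'
      simp only [t]; field_simp; ring
    have e1 : ‖(p i x - p i y) / S x‖ ≤ 4 / R * dist x y := by
      rw [norm_div, Real.norm_of_nonneg (hS0 x).le]
      exact (div_le_self (norm_nonneg _) (hS1 x)).trans (hpL i x y)
    have e2 : ‖p i y / S y * ((S y - S x) / S x)‖ ≤ (n + 1) * (4 / R) * dist x y := by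
      rw [norm_mul, norm_div (S y - S x), Real.norm_of_nonneg (hS0 x).le, norm_sub_rev]
      have a1 : ‖p i y / S y‖ ≤ 1 := by
        rw [Real.norm_of_nonneg (ht0 i y)]; exact ht1 i y
      have a2 := (div_le_self (norm_nonneg (S x - S y)) (hS1 x)).trans (hSL x y)
      have a3 : 0 ≤ ‖S x - S y‖ / S x := div_nonneg (norm_nonneg _) (hS0 x).le
      nlinarith
    rw [hid]
    refine (norm_add_le _ _).trans ?_
    nlinarith
  let q : Fin (n + 1) → X → EuclideanSpace ℝ (Fin (n + 1)) := fun i x => Q (F (cc i x))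
  have hq1 : ∀ i x, ‖q i x‖ ≤ 1 := fun i x => (hQ _ (hF1 _)).2
  have hhL : ∀ i, Lip ((n + 2) * (4 / R)) (fun x => t i x • q i x) := by
    intro i x y
    have htz : ∀ x, ¬ 0 < p i x → t i x = 0 := fun x hx => by
      have : p i x = 0 := le_antisymm (not_lt.1 hx) (hp0 i x)
      simp [t, this]
    have hnorm : ∀ x, ‖t i x • q i x‖ ≤ ‖t i x‖ := fun x => by
      rw [norm_smul]
      exact mul_le_of_le_one_right (norm_nonneg _) (hq1 i x)
    by_cases hxy : dist x y ≤ R / 2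
    · by_cases hx : 0 < p i x
      · by_cases hy : 0 < p i y
        · have : q i x = q i y := by simp only [q]; rw [hcc i x y hx hy hxy]
          show ‖t i x • q i x - t i y • q i y‖ ≤ _
          rw [this, ← sub_smul, norm_smul]
          exact (mul_le_of_le_one_right (norm_nonneg _) (hq1 i y)).trans (htL i x y)
        · have h0 := htz y hy
          have := htL i x y
          rw [h0, sub_zero] at this
          simp only [h0, zero_smul, sub_zero]
          exact (hnorm x).trans this
      · have h0 := htz x hx
        have := htL i x y
        rw [h0, zero_sub, norm_neg] at this
        simp only [h0, zero_smul, zero_sub, norm_neg]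
        exact (hnorm y).trans this
    · push Not at hxy
      have hn1 : ∀ x, ‖t i x • q i x‖ ≤ 1 := fun x => (hnorm x).trans (by
        rw [Real.norm_of_nonneg (ht0 i x)]; exact ht1 i x)
      have a1 : ‖t i x • q i x - t i y • q i y‖ ≤ 2 :=
        (norm_sub_le _ _).trans (by linarith [hn1 x, hn1 y])
      have a2 : 2 ≤ 4 / R * dist x y := by
        have : 4 / R * (R / 2) ≤ 4 / R * dist x y :=
          mul_le_mul_of_nonneg_left hxy.le (by positivity)
        have e : 4 / R * (R / 2) = 2 := by field_simp; norm_num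
        linarith
      have a3 : 0 ≤ 4 / R * dist x y := by positivity
      have a4 : (0 : ℝ) ≤ n := Nat.cast_nonneg n
      refine a1.trans ?_
      rw [mul_assoc]
      nlinarith
  let G : X → EuclideanSpace ℝ (Fin (n + 1)) := fun x => (∑ i, t i x • q i x) - z
  have hGL : Lip (B * lam) G := by
    have h := Lip.sum (Finset.univ : Finset (Fin (n + 1))) hhL
    intro x y
    have hxy := h x y
    have e : G x - G y = (∑ i, t i x • q i x) - ∑ i, t i y • q i y := by simp [G]
    rw [e]
    refine hxy.trans (le_of_eq ?_)
    congr 1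
    simp only [Finset.card_univ, Fintype.card_fin, B, R]
    push_cast
    field_simp
    ring
  have hGδ : ∀ x, δ ≤ ‖G x‖ := by
    intro x
    refine hQδ (fun i => F (cc i x)) (fun i => hF1 _) _ ?_
    refine (convex_convexHull ℝ _).sum_mem (fun i _ => ht0 i x) (htsum x) fun i _ => ?_
    exact subset_convexHull ℝ _ ⟨i, rfl⟩
  have hGF : ∀ x, ‖F x - G x‖ ≤ 1 / 4 := by
    intro x
    have hid : F x - G x = (∑ i, t i x • (F x - q i x)) + z := by
      simp only [G, smul_sub, Finset.sum_sub_distrib]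
      rw [← Finset.sum_smul, htsum x, one_smul]; abel
    have hterm : ∀ i, ‖t i x • (F x - q i x)‖ ≤ t i x * (1 / 8) := by
      intro i
      rw [norm_smul, Real.norm_of_nonneg (ht0 i x)]
      by_cases hx : 0 < p i x
      · refine mul_le_mul_of_nonneg_left ?_ (ht0 i x)
        have e : F x - q i x = (F x - F (cc i x)) - (q i x - F (cc i x)) := by abel
        rw [e]
        refine (norm_sub_le _ _).trans ?_
        have a1 := (hQ _ (hF1 (cc i x))).1
        have a2 := hFL x (cc i x)
        have a3 : L * lam * dist x (cc i x) ≤ L * lam * ((C + 1) * R) :=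
          mul_le_mul_of_nonneg_left (hcd i x hx) (by positivity)
        rw [hLR] at a3
        have a1' : ‖q i x - F (cc i x)‖ ≤ 1 / 16 := a1
        linarith
      · have : p i x = 0 := le_antisymm (not_lt.1 hx) (hp0 i x)
        have : t i x = 0 := by simp [t, this]
        simp [this]
    rw [hid]
    refine (norm_add_le _ _).trans ?_
    have : ‖∑ i, t i x • (F x - q i x)‖ ≤ 1 / 8 := by
      refine (norm_sum_le _ _).trans ((Finset.sum_le_sum fun i _ => hterm i).trans ?_)
      rw [← Finset.sum_mul, htsum x, one_mul]
    linarith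
  let b : X → ℝ := fun x => clamp (4 * ‖F x‖ - 2)
  have hbL : Lip (4 * (L * lam)) b := hFL.norm.clamp_affine (by norm_num)
  let K : X → EuclideanSpace ℝ (Fin (n + 1)) := fun x => G x + b x • (F x - G x)
  have hKL : Lip ((2 * B + 2 * L) * lam) K := by
    refine (hGL.add (hbL.smul (hFL.sub hGL) (fun x => clamp_norm _) hGF)).mono ?_
    apply le_of_eq; ring
  have hKc : ∀ x, c ≤ ‖K x‖ := by
    intro x
    by_cases hx : ‖F x‖ ≤ 1 / 2
    · have : b x = 0 := clamp_of_nonpos (by linarith)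
      simp only [K, this, zero_smul, add_zero]
      exact hcδ.trans (hGδ x)
    · push Not at hx
      have e : F x = K x + (1 - b x) • (F x - G x) := by
        simp only [K, sub_smul, one_smul]; abel
      have h1 : ‖(1 - b x) • (F x - G x)‖ ≤ 1 / 4 := by
        rw [norm_smul, Real.norm_of_nonneg (sub_nonneg.2 (clamp_le_one _))]
        have := clamp_nonneg (4 * ‖F x‖ - 2)
        have h2 : 1 - b x ≤ 1 := by simp only [b]; linarith
        exact (mul_le_of_le_one_left (norm_nonneg _) h2).trans (hGF x)
      have h2 := norm_add_le (K x) ((1 - b x) • (F x - G x))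
      rw [← e] at h2
      linarith
  refine ⟨fun x => ⟨rho c (K x), by simpa using rho_norm_eq_one hc (hKc x)⟩, ?_, ?_⟩
  · intro a
    apply Subtype.ext
    have hn : ‖F a‖ = 1 := by rw [hFA]; simp
    have hb : b a = 1 := clamp_of_one_le (by rw [hn]; norm_num)
    have hK : K a = f a := by
      simp only [K, hb, one_smul]; rw [← hFA a]; abel
    show rho c (K a) = f a
    rw [hK]
    exact rho_of_norm_one (by linarith) (by simp)
  · intro x y
    have := hKL.rho hc x y
    rw [Subtype.dist_eq, dist_eq_norm]
    refine this.trans (le_of_eq (by ring))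

theorem norm_le_sum {m : ℕ} (v : EuclideanSpace ℝ (Fin m)) : ‖v‖ ≤ ∑ i, |v i| := by
  rw [EuclideanSpace.norm_eq]
  refine Real.sqrt_le_iff.2 ⟨Finset.sum_nonneg fun i _ => abs_nonneg _, ?_⟩
  simp only [Real.norm_eq_abs]
  exact Finset.sum_sq_le_sq_sum_of_nonneg fun i _ => abs_nonneg _

theorem abs_coord_le {m : ℕ} (v : EuclideanSpace ℝ (Fin m)) (i : Fin m) : |v i| ≤ ‖v‖ :=
  PiLp.norm_apply_le v i

theorem nagata_step {X : Type*} [MetricSpace X] (n : ℕ)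
    (he : LipschitzExtensorOf X (Metric.sphere (0 : EuclideanSpace ℝ (Fin (n + 1))) 1))
    (hd : NagataDimLE X (n + 1)) : NagataDimLE X n := by
  classical
  obtain ⟨Ce, hCe, he⟩ := he
  obtain ⟨Cd, hCd, hd⟩ := hd
  let g : ℝ := 1 / ((n + 1) * (n + 3))
  have hg : 0 < g := by positivity
  let M : ℝ := 2 + Ce * 64 * (n + 1) / g
  have hM2 : 2 ≤ M := by
    have : 0 ≤ Ce * 64 * (n + 1) / g := by positivity
    simp only [M]; linarith
  have hM0 : 0 < M := by linarith
  refine ⟨2 * (Cd + 1) * M, by positivity, fun r hr => ?_⟩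
  let R : ℝ := M * r
  have hR : 0 < R := by positivity
  obtain ⟨U, h1, h2, h3⟩ := hd R hR
  obtain ⟨p, cc, hp0, hp1, hpL, hpx, hcd, hcc⟩ := label hR U h1 h2 h3
  let w : X → EuclideanSpace ℝ (Fin (n + 1)) := fun x =>
    WithLp.toLp 2 fun i => p i.castSucc x - p (Fin.last _) x
  have hwL : Lip ((n + 1) * (8 / R)) w := by
    intro x y
    refine (norm_le_sum _).trans ?_
    have : ∀ i, |(w x - w y) i| ≤ 8 / R * dist x y := by
      intro i
      have e : (w x - w y) i = (p i.castSucc x - p i.castSucc y)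
          - (p (Fin.last _) x - p (Fin.last _) y) := by
        simp [w]; ring
      rw [e]
      have a1 := hpL i.castSucc x y
      have a2 := hpL (Fin.last _) x y
      rw [Real.norm_eq_abs] at a1 a2
      refine (abs_sub _ _).trans ?_
      have : 8 / R = 4 / R + 4 / R := by ring
      rw [this, add_mul]
      linarith
    refine (Finset.sum_le_card_nsmul _ _ _ fun i _ => this i).trans (le_of_eq ?_)
    simp; ring
  let A : Set X := {x | ∃ i, p i x = 0}
  have hwA : ∀ x ∈ A, 1 / 2 ≤ ‖w x‖ := by
    rintro x ⟨j, hj⟩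
    obtain ⟨i, hi⟩ := hpx x
    have key : ∃ k : Fin (n + 1), 1 / 2 ≤ |w x k| := by
      by_cases hl : p (Fin.last _) x ≤ 1 / 2
      · have hne : i ≠ Fin.last _ := by rintro rfl; linarith
        obtain ⟨k, rfl⟩ := Fin.exists_castSucc_eq.2 hne
        refine ⟨k, ?_⟩
        have e : w x k = p k.castSucc x - p (Fin.last _) x := rfl
        rw [e, hi]
        exact le_trans (by linarith) (le_abs_self _)
      · have hne : j ≠ Fin.last _ := by rintro rfl; linarith
        obtain ⟨k, rfl⟩ := Fin.exists_castSucc_eq.2 hne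
        refine ⟨k, ?_⟩
        have e : w x k = p k.castSucc x - p (Fin.last _) x := rfl
        rw [e, hj]
        exact le_trans (by linarith) (neg_le_abs _)
    obtain ⟨k, hk⟩ := key
    exact hk.trans (abs_coord_le _ k)
  let lam : ℝ := 32 * (n + 1) / R
  have hlam : 0 < lam := by positivity
  have huL : Lip lam (fun x => rho (1 / 2) (w x)) := by
    refine (hwL.rho (by norm_num)).mono (le_of_eq ?_)
    simp only [lam]; ring
  have hV : ∃ V : X → EuclideanSpace ℝ (Fin (n + 1)), (∀ x, ‖V x‖ = 1) ∧
      Lip (Ce * lam) V ∧ ∀ x ∈ A, V x = rho (1 / 2) (w x) := by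
    by_cases hA : A.Nonempty
    · obtain ⟨V, hV1, hV2⟩ := he A hA lam hlam
        (fun a => ⟨rho (1 / 2) (w a), by
          simpa using rho_norm_eq_one (by norm_num) (hwA a a.2)⟩)
        (fun a b => by
          rw [Subtype.dist_eq, dist_eq_norm]; exact huL a b)
      refine ⟨fun x => V x, fun x => by simp, fun x y => ?_, fun x hx => ?_⟩
      · rw [← dist_eq_norm]; exact hV2 x y
      · have := hV1 ⟨x, hx⟩
        exact congrArg Subtype.val this
    · refine ⟨fun _ => EuclideanSpace.single 0 1, fun x => by simp, fun x y => ?_, fun x hx => ?_⟩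
      · simp only [sub_self, norm_zero]; positivity
      · exact absurd ⟨x, hx⟩ hA
  obtain ⟨V, hVn, hVL, hVA⟩ := hV
  let v : X → Fin (n + 2) → ℝ := fun x => Fin.snoc (α := fun _ => ℝ) (fun i => V x i) 0
  have hvc : ∀ x (i : Fin (n + 1)), v x i.castSucc = V x i := fun x i => by
    simp [v]
  have hvl : ∀ x, v x (Fin.last _) = 0 := fun x => by simp [v]
  have hvL : ∀ i x y, |v x i - v y i| ≤ Ce * lam * dist x y := by
    intro i x y
    refine Fin.lastCases ?_ (fun k => ?_) i
    · rw [hvl, hvl]; simp only [sub_self, abs_zero]; positivity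
    · rw [hvc, hvc]
      exact (abs_coord_le (V x - V y) k).trans (hVL x y)
  have hgap : ∀ x, ∃ S : Finset (Fin (n + 2)), S.Nonempty ∧ (∃ j, j ∉ S) ∧
      ∀ i ∈ S, ∀ j ∉ S, v x j + g ≤ v x i := by
    intro x
    have hk : ∃ k, 1 / ((n : ℝ) + 1) ≤ |V x k| := by
      by_contra hcon
      push Not at hcon
      have h1 : ∑ k, |V x k| < ∑ _k : Fin (n + 1), 1 / ((n : ℝ) + 1) :=
        Finset.sum_lt_sum_of_nonempty Finset.univ_nonempty fun k _ => hcon k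
      have h2 := norm_le_sum (V x)
      rw [hVn x] at h2
      have h3 : ∑ _k : Fin (n + 1), 1 / ((n : ℝ) + 1) = 1 := by
        simp only [Finset.sum_const, Finset.card_univ, Fintype.card_fin, nsmul_eq_mul]
        push_cast; field_simp
      linarith
    obtain ⟨k, hk⟩ := hk
    have hgg : (((n + 2 : ℕ) : ℝ) + 1) * g = 1 / ((n : ℝ) + 1) := by
      simp only [g]; push_cast
      field_simp; ring
    rcases le_abs.1 hk with h | h
    · refine gap (v x) hg (a := Fin.last _) (b := k.castSucc) ?_
      rw [hgg, hvl, hvc]; linarith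
    · refine gap (v x) hg (a := k.castSucc) (b := Fin.last _) ?_
      rw [hgg, hvl, hvc]; linarith
  have hpos : ∀ x i j, v x j + g ≤ v x i → 0 < p i x := by
    intro x i j hij
    by_cases hx : x ∈ A
    · have hdiff : ∀ l, v x l = (max (1 / 2) ‖w x‖)⁻¹ * (p l x - p (Fin.last _) x) := by
        intro l
        refine Fin.lastCases ?_ (fun k => ?_) l
        · rw [hvl]; simp
        · rw [hvc, hVA x hx]; simp [rho, w]
      rw [hdiff, hdiff] at hij
      have hm : 0 < (max (1 / 2) ‖w x‖)⁻¹ := inv_pos.2 (lt_max_of_lt_left (by norm_num))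
      have hlt : (max (1 / 2) ‖w x‖)⁻¹ * (p j x - p (Fin.last _) x) <
          (max (1 / 2) ‖w x‖)⁻¹ * (p i x - p (Fin.last _) x) := by linarith
      have := lt_of_mul_lt_mul_left hlt hm.le
      linarith [hp0 j x]
    · refine lt_of_le_of_ne (hp0 i x) fun h => hx ⟨i, h.symm⟩
  let Y : ∀ S : Finset (Fin (n + 2)), S.Nonempty → X → Set X := fun S hS z =>
    {x | (∀ i ∈ S, ∀ j ∉ S, v x j + g ≤ v x i) ∧ cc hS.choose x = z}
  refine ⟨fun k => {W | ∃ (S : Finset (Fin (n + 2))) (hS : S.Nonempty) (z : X),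
    S.card = (k : ℕ) + 1 ∧ W = Y S hS z}, ?_, ?_, ?_⟩
  · intro x
    obtain ⟨S, hS, ⟨j, hj⟩, hSx⟩ := hgap x
    have hlt : S.card < n + 2 := by
      have : S ⊂ Finset.univ := Finset.ssubset_univ_iff.2 fun h => hj (h ▸ Finset.mem_univ j)
      simpa using Finset.card_lt_card this
    have hpos' := hS.card_pos
    refine ⟨⟨S.card - 1, by omega⟩, Y S hS (cc hS.choose x), ⟨S, hS, _, ?_, rfl⟩, hSx, rfl⟩
    simp only; omega
  · rintro k _ ⟨S, hS, z, hSk, rfl⟩ _ ⟨T, hT, z', hTk, rfl⟩ hne x ⟨hx1, hx2⟩ y ⟨hy1, hy2⟩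
    by_contra hcon
    push Not at hcon
    apply hne
    have hsmall : Ce * lam * dist x y < g := by
      have a1 : Ce * lam * dist x y ≤ Ce * lam * r :=
        mul_le_mul_of_nonneg_left hcon (by positivity)
      have a2 : Ce * lam * r = Ce * 32 * (n + 1) / M := by
        simp only [lam, R]; field_simp
      have a3 : Ce * 32 * (n + 1) / M < g := by
        rw [div_lt_iff₀ hM0]
        have : g * M = 2 * g + Ce * 64 * (n + 1) := by
          simp only [M]; field_simp
        rw [this]
        have : 0 ≤ Ce * 32 * (n + 1) := by positivity
        linarith
      linarith
    have hST : S = T := by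
      by_contra hST
      have hc : S.card = T.card := by rw [hSk, hTk]
      have h1 : ¬ S ⊆ T := fun h => hST (Finset.eq_of_subset_of_card_le h hc.ge)
      have h2 : ¬ T ⊆ S := fun h => hST (Finset.eq_of_subset_of_card_le h hc.le).symm
      obtain ⟨i, hiS, hiT⟩ := Finset.not_subset.1 h1
      obtain ⟨j, hjT, hjS⟩ := Finset.not_subset.1 h2
      have b1 := hx1 i hiS j hjS
      have b2 := hy1 j hjT i hiT
      have b3 := abs_le.1 (hvL i x y)
      have b4 := abs_le.1 (hvL j x y)
      linarith [b3.1, b3.2, b4.1, b4.2]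
    subst hST
    obtain ⟨j, hj⟩ : ∃ j, j ∉ S := by
      by_contra hcon
      push Not at hcon
      have : S = Finset.univ := Finset.eq_univ_iff_forall.2 hcon
      have h := congrArg Finset.card this
      rw [hSk] at h
      simp at h
      have := k.2
      omega
    have hzz : z = z' := by
      rw [← hx2, ← hy2]
      refine hcc _ x y (hpos x _ j (hx1 _ hS.choose_spec j hj))
        (hpos y _ j (hy1 _ hS.choose_spec j hj)) ?_
      have : 2 * r ≤ R := mul_le_mul_of_nonneg_right hM2 hr.le
      linarith
    rw [hzz]
  · rintro k _ ⟨S, hS, z, hSk, rfl⟩ x ⟨hx1, hx2⟩ y ⟨hy1, hy2⟩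
    obtain ⟨j, hj⟩ : ∃ j, j ∉ S := by
      by_contra hcon
      push Not at hcon
      have : S = Finset.univ := Finset.eq_univ_iff_forall.2 hcon
      have h := congrArg Finset.card this
      rw [hSk] at h
      simp at h
      have := k.2
      omega
    have a1 := hcd _ x (hpos x _ j (hx1 _ hS.choose_spec j hj))
    have a2 := hcd _ y (hpos y _ j (hy1 _ hS.choose_spec j hj))
    rw [hx2] at a1
    rw [hy2] at a2
    have := dist_triangle_right x y z
    have e : 2 * (Cd + 1) * M * r = (Cd + 1) * R + (Cd + 1) * R := by simp only [R]; ring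
    rw [e]
    linarith

/-- first coordinates -/
noncomputable def ini {n : ℕ} (v : EuclideanSpace ℝ (Fin (n + 2))) :
    EuclideanSpace ℝ (Fin (n + 1)) := WithLp.toLp 2 fun i => v i.castSucc

/-- append a coordinate -/
noncomputable def app {n : ℕ} (u : EuclideanSpace ℝ (Fin (n + 1))) (t : ℝ) :
    EuclideanSpace ℝ (Fin (n + 2)) := WithLp.toLp 2 (Fin.snoc (α := fun _ => ℝ) (fun i => u i) t)

theorem ini_norm_sq {n : ℕ} (v : EuclideanSpace ℝ (Fin (n + 2))) :
    ‖v‖ ^ 2 = ‖ini v‖ ^ 2 + (v (Fin.last _)) ^ 2 := by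
  rw [EuclideanSpace.norm_sq_eq, EuclideanSpace.norm_sq_eq, Fin.sum_univ_castSucc]
  simp [ini]

theorem ini_sub {n : ℕ} (v w : EuclideanSpace ℝ (Fin (n + 2))) :
    ini v - ini w = ini (v - w) := by ext i; simp [ini]

theorem ini_norm_le {n : ℕ} (v : EuclideanSpace ℝ (Fin (n + 2))) : ‖ini v‖ ≤ ‖v‖ := by
  have := ini_norm_sq v
  refine le_of_sq_le_sq ?_ (norm_nonneg _)
  nlinarith [sq_nonneg (v (Fin.last _))]
where
  le_of_sq_le_sq {a b : ℝ} (h : a ^ 2 ≤ b ^ 2) (hb : 0 ≤ b) : a ≤ b := by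
    exact le_of_abs_le (by simpa [abs_of_nonneg hb] using sq_le_sq.1 h)

theorem app_sub {n : ℕ} (u w : EuclideanSpace ℝ (Fin (n + 1))) (s t : ℝ) :
    app u s - app w t = app (u - w) (s - t) := by
  ext i
  refine Fin.lastCases ?_ (fun k => ?_) i <;> simp [app]

theorem app_ini {n : ℕ} (v : EuclideanSpace ℝ (Fin (n + 2))) :
    app (ini v) (v (Fin.last _)) = v := by
  ext i
  refine Fin.lastCases ?_ (fun k => ?_) i <;> simp [app, ini]

theorem app_norm_sq {n : ℕ} (u : EuclideanSpace ℝ (Fin (n + 1))) (t : ℝ) :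
    ‖app u t‖ ^ 2 = ‖u‖ ^ 2 + t ^ 2 := by
  rw [ini_norm_sq]
  have h1 : ini (app u t) = u := by ext i; simp [ini, app]
  have h2 : app u t (Fin.last _) = t := by simp [app]
  rw [h1, h2]

theorem app_norm_le {n : ℕ} (u : EuclideanSpace ℝ (Fin (n + 1))) (t : ℝ) :
    ‖app u t‖ ≤ ‖u‖ + |t| := by
  refine ini_norm_le.le_of_sq_le_sq ?_ (by positivity)
  rw [app_norm_sq, ← sq_abs t]
  nlinarith [norm_nonneg u, abs_nonneg t]

theorem le_app_norm_left {n : ℕ} (u : EuclideanSpace ℝ (Fin (n + 1))) (t : ℝ) :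
    ‖u‖ ≤ ‖app u t‖ := by
  refine ini_norm_le.le_of_sq_le_sq ?_ (by positivity)
  rw [app_norm_sq]
  nlinarith [sq_nonneg t]

theorem le_app_norm_right {n : ℕ} (u : EuclideanSpace ℝ (Fin (n + 1))) (t : ℝ) :
    |t| ≤ ‖app u t‖ := by
  refine ini_norm_le.le_of_sq_le_sq ?_ (by positivity)
  rw [app_norm_sq, sq_abs]
  nlinarith [sq_nonneg ‖u‖]

theorem suspension {X : Type*} [MetricSpace X] (n : ℕ)
    (he : LipschitzExtensorOf X (Metric.sphere (0 : EuclideanSpace ℝ (Fin (n + 1))) 1)) :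
    LipschitzExtensorOf X (Metric.sphere (0 : EuclideanSpace ℝ (Fin (n + 1 + 1))) 1) := by
  obtain ⟨Ce, hCe, he⟩ := he
  obtain ⟨L, hL, hext⟩ := ballExt X (EuclideanSpace ℝ (Fin (n + 1 + 1)))
  let P : ℝ := Ce * (4 * L) + L
  refine ⟨4 * (14 * L + 2 * P), by positivity, ?_⟩
  intro A _ lam hlam f hf
  obtain ⟨F, hF1, hFL, hFA⟩ := hext A lam hlam f hf
  let h : X → ℝ := fun x => F x (Fin.last _)
  have hh : Lip (L * lam) h := fun x y =>
    (abs_coord_le (F x - F y) (Fin.last _)).trans (hFL x y)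
  let F0 : X → EuclideanSpace ℝ (Fin (n + 1)) := fun x => ini (F x)
  have hF0 : Lip (L * lam) F0 := fun x y => by
    simp only [F0]; rw [ini_sub]; exact (ini_norm_le _).trans (hFL x y)
  have hF01 : ∀ x, ‖F0 x‖ ≤ 1 := fun x => (ini_norm_le _).trans (hF1 x)
  let A' : Set X := {x | x ∈ A ∧ |h x| ≤ 2 / 3}
  have hFn : ∀ x ∈ A, ‖F x‖ = 1 := fun x hx => by rw [hFA ⟨x, hx⟩]; simp
  have hA'n : ∀ x ∈ A', 1 / 2 ≤ ‖F0 x‖ := by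
    rintro x ⟨hx, hhx⟩
    have e := ini_norm_sq (F x)
    rw [hFn x hx] at e
    have e' : (1 : ℝ) ^ 2 = ‖F0 x‖ ^ 2 + h x ^ 2 := e
    have : h x ^ 2 ≤ (2 / 3) ^ 2 := by rw [← sq_abs]; gcongr
    refine ini_norm_le.le_of_sq_le_sq ?_ (norm_nonneg _)
    nlinarith
  have huL : Lip (4 * L * lam) (fun x => rho (1 / 2) (F0 x)) :=
    (hF0.rho (by norm_num)).mono (le_of_eq (by ring))
  have hV : ∃ V : X → EuclideanSpace ℝ (Fin (n + 1)), (∀ x, ‖V x‖ = 1) ∧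
      Lip (Ce * (4 * L * lam)) V ∧ ∀ x ∈ A', V x = rho (1 / 2) (F0 x) := by
    by_cases hA : A'.Nonempty
    · obtain ⟨V, hV1, hV2⟩ := he A' hA (4 * L * lam) (by positivity)
        (fun a => ⟨rho (1 / 2) (F0 a), by
          simpa using rho_norm_eq_one (by norm_num) (hA'n a a.2)⟩)
        (fun a b => by
          rw [Subtype.dist_eq, dist_eq_norm]; exact huL a b)
      refine ⟨fun x => V x, fun x => by simp, fun x y => ?_, fun x hx => ?_⟩
      · rw [← dist_eq_norm]; exact hV2 x y
      · have := hV1 ⟨x, hx⟩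
        exact congrArg Subtype.val this
    · refine ⟨fun _ => EuclideanSpace.single 0 1, fun x => by simp, fun x y => ?_, fun x hx => ?_⟩
      · simp only [sub_self, norm_zero]; positivity
      · exact absurd ⟨x, hx⟩ hA
  obtain ⟨V, hVn, hVL, hVA⟩ := hV
  let s : X → ℝ := fun x => max (1 / 2) ‖F0 x‖
  have hsL : Lip (L * lam) s := fun x y => by
    refine (abs_max_sub_max_le_max _ _ _ _).trans (max_le ?_ (hF0.norm x y))
    simp only [sub_self, abs_zero]; positivity
  have hs0 : ∀ x, 1 / 2 ≤ s x := fun x => le_max_left _ _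
  have hs1 : ∀ x, ‖s x‖ ≤ 1 := fun x => by
    rw [Real.norm_of_nonneg (by linarith [hs0 x])]
    exact max_le (by norm_num) (hF01 x)
  let W : X → EuclideanSpace ℝ (Fin (n + 1)) := fun x => s x • V x
  have hWL : Lip (P * lam) W :=
    (hsL.smul hVL hs1 (fun x => (hVn x).le)).mono (le_of_eq (by simp only [P]; ring))
  have hW1 : ∀ x, ‖W x‖ ≤ 1 := fun x => by
    simp only [W]; rw [norm_smul, hVn, mul_one]; exact hs1 x
  let a : X → ℝ := fun x => clamp (6 * ‖h x‖ - 3)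
  have haL : Lip (6 * (L * lam)) a := hh.norm.clamp_affine (by norm_num)
  let Z : X → EuclideanSpace ℝ (Fin (n + 1)) := fun x => W x + a x • (F0 x - W x)
  have hZL : Lip ((13 * L + 2 * P) * lam) Z := by
    refine (hWL.add (haL.smul (b := 2) (hF0.sub hWL) (fun x => clamp_norm _) ?_)).mono ?_
    · intro x
      exact (norm_sub_le _ _).trans (by linarith [hF01 x, hW1 x])
    · apply le_of_eq; ring
  let G : X → EuclideanSpace ℝ (Fin (n + 1 + 1)) := fun x => app (Z x) (h x)
  have hGL : Lip ((14 * L + 2 * P) * lam) G := by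
    intro x y
    simp only [G]
    rw [app_sub]
    refine (app_norm_le _ _).trans ?_
    have a1 := hZL x y
    have a2 := hh x y
    rw [Real.norm_eq_abs] at a2
    linarith
  have hGn : ∀ x, 1 / 2 ≤ ‖G x‖ := by
    intro x
    by_cases hx : |h x| ≤ 1 / 2
    · have ha0 : a x = 0 := clamp_of_nonpos (by rw [Real.norm_eq_abs]; linarith)
      have hZ : Z x = s x • V x := by simp [Z, ha0, W]
      refine le_trans ?_ (le_app_norm_left _ _)
      rw [hZ, norm_smul, hVn, mul_one]
      exact (hs0 x).trans (le_abs_self _)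
    · push Not at hx
      exact hx.le.trans (le_app_norm_right _ _)
  refine ⟨fun x => ⟨rho (1 / 2) (G x), by simpa using rho_norm_eq_one (by norm_num) (hGn x)⟩, ?_, ?_⟩
  · intro x
    apply Subtype.ext
    have hZ : Z x = F0 x := by
      by_cases hx : |h x| ≤ 2 / 3
      · have hxA : (x : X) ∈ A' := ⟨x.2, hx⟩
        have : W x = F0 x := by
          have hpos : max (1 / 2) ‖F0 x‖ ≠ 0 := (lt_max_of_lt_left (by norm_num)).ne'
          simp only [W, s]
          rw [hVA x hxA, rho, smul_smul, mul_inv_cancel₀ hpos, one_smul]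
        simp [Z, this]
      · push Not at hx
        have : a x = 1 := clamp_of_one_le (by rw [Real.norm_eq_abs]; linarith)
        simp [Z, this]
    have hG : G x = f x := by
      simp only [G]; rw [hZ, ← hFA x]; exact app_ini _
    show rho (1 / 2) (G x) = f x
    rw [hG]
    exact rho_of_norm_one (by norm_num) (by simp)
  · intro x y
    have := hGL.rho (c := 1 / 2) (by norm_num) x y
    rw [Subtype.dist_eq, dist_eq_norm]
    refine this.trans (le_of_eq (by ring))

theorem nagata_of_extensor {X : Type*} [MetricSpace X] (k : ℕ) : ∀ n : ℕ,
    LipschitzExtensorOf X (Metric.sphere (0 : EuclideanSpace ℝ (Fin (n + 1))) 1) →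
    NagataDimLE X (n + k) → NagataDimLE X n := by
  induction k with
  | zero => intro n _ h; exact h
  | succ k ih =>
    intro n he hd
    refine nagata_step n he (ih (n + 1) (suspension n he) ?_)
    have : n + 1 + k = n + (k + 1) := by omega
    rw [this]; exact hd

end NagataAux

theorem sphere_extensor_iff_nagata_of_finite_nagata
    {X : Type*} [MetricSpace X] (N : ℕ) (hN : NagataDimLE X N) (n : ℕ) :
    LipschitzExtensorOf X (Metric.sphere (0 : EuclideanSpace ℝ (Fin (n + 1))) 1) ↔
      NagataDimLE X n := by
  refine ⟨fun he => ?_, NagataAux.extensor_of_nagata n⟩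
  exact NagataAux.nagata_of_extensor N n he (NagataAux.nagata_mono (Nat.le_add_left N n) hN)
end

section
/- For a metric space X and integer m ≥ 0 the following are equivalent: (a) S^m is a Lipschitz extensor of X; (b) there is t > 0 such that every cover U = {U_0,…,U_{m+1}} of X by m+2 subsets admits a refinement V (a cover of X) with Lebesgue number L(V) ≥ t·L(U) and multiplicity of V at most m+1. -/
/-- The multiplicity of a family `V` of subsets of `X` is at most `m`: for every point `x`,
the number of members `W` of `V` with `dist (x, X \ W) > 0` (equivalently `x ∈ interior W`)
is at most `m`. -/
def MultiplicityLE {X : Type*} [MetricSpace X] (V : Set (Set X)) (m : ℕ) : Prop :=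
  ∀ x : X, {W | W ∈ V ∧ x ∈ interior W}.Finite ∧ {W | W ∈ V ∧ x ∈ interior W}.ncard ≤ m

namespace SphereExt

theorem nz_lip {E : Type*} [NormedAddCommGroup E] [NormedSpace ℝ E] (v w : E) (ρ : ℝ)
    (hρ : 0 < ρ) (hv : ρ ≤ ‖v‖) (hw : ρ ≤ ‖w‖) :
    ‖‖v‖⁻¹ • v - ‖w‖⁻¹ • w‖ ≤ 2 / ρ * ‖v - w‖ := by
  have hv0 : 0 < ‖v‖ := hρ.trans_le hv
  have hw0 : 0 < ‖w‖ := hρ.trans_le hw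
  have e : ‖v‖⁻¹ • v - ‖w‖⁻¹ • w = ‖v‖⁻¹ • (v - w) + (‖v‖⁻¹ - ‖w‖⁻¹) • w := by
    module
  have h1 : ‖‖v‖⁻¹ • (v - w)‖ ≤ 1 / ρ * ‖v - w‖ := by
    rw [norm_smul, norm_inv, norm_norm, inv_eq_one_div]
    gcongr
  have h2 : ‖(‖v‖⁻¹ - ‖w‖⁻¹) • w‖ ≤ 1 / ρ * ‖v - w‖ := by
    rw [norm_smul, Real.norm_eq_abs]
    have : ‖v‖⁻¹ - ‖w‖⁻¹ = (‖w‖ - ‖v‖) / (‖v‖ * ‖w‖) := by field_simp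
    rw [this, abs_div, abs_of_pos (mul_pos hv0 hw0)]
    have e2 : |‖w‖ - ‖v‖| / (‖v‖ * ‖w‖) * ‖w‖ = 1 / ‖v‖ * |‖w‖ - ‖v‖| := by field_simp
    rw [e2]
    have := abs_norm_sub_norm_le w v
    rw [norm_sub_rev] at this
    gcongr
  rw [e]
  calc _ ≤ _ := norm_add_le _ _
    _ ≤ 1 / ρ * ‖v - w‖ + 1 / ρ * ‖v - w‖ := add_le_add h1 h2
    _ = _ := by ring

theorem norm_le_of_coord {n : ℕ} (v : EuclideanSpace ℝ (Fin (n + 1))) (K : ℝ)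
    (h : ∀ i, |v i| ≤ K) : ‖v‖ ≤ (n + 1) * K := by
  have hK : 0 ≤ K := (abs_nonneg _).trans (h 0)
  rw [EuclideanSpace.norm_eq]
  apply Real.sqrt_le_iff.2
  refine ⟨by positivity, ?_⟩
  calc ∑ i, ‖v i‖ ^ 2 ≤ ∑ _i : Fin (n + 1), K ^ 2 := by
        apply Finset.sum_le_sum
        intro i _
        rw [Real.norm_eq_abs]
        gcongr
        exact h i
    _ = (n + 1) * K ^ 2 := by simp
    _ ≤ ((n + 1) * K) ^ 2 := by
        have : (0 : ℝ) ≤ n := Nat.cast_nonneg n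
        nlinarith [mul_nonneg this (sq_nonneg K), mul_nonneg (mul_nonneg this this) (sq_nonneg K)]

theorem coord_le_norm {n : ℕ} (v : EuclideanSpace ℝ (Fin n)) (i : Fin n) : |v i| ≤ ‖v‖ := by
  simpa using PiLp.norm_apply_le v i

theorem exists_big_coord {n : ℕ} (v : EuclideanSpace ℝ (Fin (n + 1))) (hv : ‖v‖ = 1) :
    ∃ j, 1 / ((n : ℝ) + 1) ≤ |v j| := by
  obtain ⟨j, hj⟩ := Finite.exists_max (fun j => |v j|)
  refine ⟨j, ?_⟩
  have := norm_le_of_coord v _ hj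
  rw [hv] at this
  rw [div_le_iff₀ (by positivity)]
  linarith

/-- Quotient by the diagonal. -/
noncomputable def Lm {m : ℕ} (φ : Fin (m + 2) → ℝ) : EuclideanSpace ℝ (Fin (m + 1)) :=
  WithLp.toLp 2 (fun j : Fin (m + 1) => φ j.succ - φ 0)

theorem Lm_apply {m : ℕ} (φ : Fin (m + 2) → ℝ) (j : Fin (m + 1)) :
    Lm φ j = φ j.succ - φ 0 := rfl

theorem Lm_norm_ge {m : ℕ} (φ : Fin (m + 2) → ℝ) (c : ℝ) (h0 : ∃ i, φ i = 0)
    (h1 : ∃ i, c ≤ φ i) : c / 2 ≤ ‖Lm φ‖ := by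
  obtain ⟨i, hi⟩ := h0
  obtain ⟨k, hk⟩ := h1
  have key : ∀ i, |φ i - φ 0| ≤ ‖Lm φ‖ := by
    intro i
    refine Fin.cases ?_ (fun j => ?_) i
    · simp
    · exact coord_le_norm (Lm φ) j
  have a := (abs_le.1 (key i)).1
  have b := (abs_le.1 (key k)).2
  linarith

theorem Lm_lip {m : ℕ} (φ ψ : Fin (m + 2) → ℝ) (K : ℝ) (h : ∀ i, |φ i - ψ i| ≤ K) :
    ‖Lm φ - Lm ψ‖ ≤ (m + 1) * (2 * K) := by
  apply norm_le_of_coord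
  intro j
  have e : (Lm φ - Lm ψ) j = (φ j.succ - ψ j.succ) - (φ 0 - ψ 0) := by
    simp [Lm_apply]; ring
  rw [e]
  have := abs_sub (φ j.succ - ψ j.succ) (φ 0 - ψ 0)
  have := h j.succ
  have := h 0
  linarith

/-- Normalisation. -/
noncomputable def nz {m : ℕ} (φ : Fin (m + 2) → ℝ) : EuclideanSpace ℝ (Fin (m + 1)) :=
  ‖Lm φ‖⁻¹ • Lm φ

theorem nz_norm {m : ℕ} (φ : Fin (m + 2) → ℝ) (c : ℝ) (hc : 0 < c) (h0 : ∃ i, φ i = 0)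
    (h1 : ∃ i, c ≤ φ i) : nz φ ∈ Metric.sphere (0 : EuclideanSpace ℝ (Fin (m + 1))) 1 := by
  have := Lm_norm_ge φ c h0 h1
  have h : 0 < ‖Lm φ‖ := by linarith
  simp only [mem_sphere_iff_norm, sub_zero, nz, norm_smul, norm_inv, norm_norm]
  field_simp

theorem nz_dist {m : ℕ} (φ ψ : Fin (m + 2) → ℝ) (c K : ℝ) (hc : 0 < c) (h0 : ∃ i, φ i = 0)
    (h1 : ∃ i, c ≤ φ i) (k0 : ∃ i, ψ i = 0) (k1 : ∃ i, c ≤ ψ i)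
    (h : ∀ i, |φ i - ψ i| ≤ K) :
    dist (nz φ) (nz ψ) ≤ 8 * (m + 1) / c * K := by
  rw [dist_eq_norm]
  calc _ ≤ 2 / (c / 2) * ‖Lm φ - Lm ψ‖ :=
        nz_lip _ _ _ (by positivity) (Lm_norm_ge φ c h0 h1) (Lm_norm_ge ψ c k0 k1)
    _ ≤ 2 / (c / 2) * ((m + 1) * (2 * K)) := by
        gcongr
        exact Lm_lip _ _ _ h
    _ = _ := by field_simp; ring

/-- Representative modulo the diagonal with minimum `0`. -/
noncomputable def mn {m : ℕ} (v : Fin (m + 2) → ℝ) : ℝ :=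
  Finset.univ.inf' Finset.univ_nonempty v

theorem mn_le {m : ℕ} (v : Fin (m + 2) → ℝ) (i) : mn v ≤ v i :=
  Finset.inf'_le _ (Finset.mem_univ i)

theorem mn_eq {m : ℕ} (v : Fin (m + 2) → ℝ) : ∃ i, mn v = v i := by
  obtain ⟨i, _, hi⟩ := Finset.exists_mem_eq_inf' Finset.univ_nonempty v
  exact ⟨i, hi⟩

/-- Representative modulo the diagonal with minimum `0`. -/
noncomputable def red {m : ℕ} (v : Fin (m + 2) → ℝ) (i : Fin (m + 2)) : ℝ := v i - mn v

theorem red_nonneg {m : ℕ} (v : Fin (m + 2) → ℝ) (i) : 0 ≤ red v i :=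
  sub_nonneg.2 (mn_le v i)

theorem red_zero {m : ℕ} (v : Fin (m + 2) → ℝ) : ∃ i, red v i = 0 := by
  obtain ⟨i, hi⟩ := mn_eq v
  exact ⟨i, by simp [red, hi]⟩

theorem red_lip {m : ℕ} (v w : Fin (m + 2) → ℝ) (K : ℝ) (h : ∀ i, |v i - w i| ≤ K) (i) :
    |red v i - red w i| ≤ 2 * K := by
  obtain ⟨a, ha⟩ := mn_eq v
  obtain ⟨b, hb⟩ := mn_eq w
  have h1 := mn_le v b
  have h2 := mn_le w a
  have h3 := abs_le.1 (h a)
  have h4 := abs_le.1 (h b)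
  have h5 := abs_le.1 (h i)
  unfold red
  rw [abs_le]
  constructor <;> linarith

theorem red_le {m : ℕ} (v : Fin (m + 2) → ℝ) (h : ∀ i, |v i| ≤ 1) (i) : red v i ≤ 2 := by
  obtain ⟨a, ha⟩ := mn_eq v
  have h3 := abs_le.1 (h a)
  have h5 := abs_le.1 (h i)
  unfold red
  linarith

theorem red_big {m : ℕ} (v : Fin (m + 2) → ℝ) (ε : ℝ) (h0 : v 0 = 0) (j) (h : ε ≤ |v j|) :
    ∃ i, ε ≤ red v i := by
  rcases le_abs'.1 h with h | h
  · refine ⟨0, ?_⟩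
    have := mn_le v j
    unfold red; linarith
  · refine ⟨j, ?_⟩
    have := mn_le v 0
    unfold red; linarith

theorem Lm_red {m : ℕ} (v : Fin (m + 2) → ℝ) : Lm (red v) = Lm v := by
  ext j; simp [Lm_apply, red]

/-- Lift of a vector with zero first coordinate. -/
noncomputable def lift {m : ℕ} (v : Fin (m + 1) → ℝ) : Fin (m + 2) → ℝ := Fin.cons 0 v

@[simp] theorem lift_zero {m : ℕ} (v : Fin (m + 1) → ℝ) : lift v 0 = 0 := rfl
@[simp] theorem lift_succ {m : ℕ} (v : Fin (m + 1) → ℝ) (j) : lift v (Fin.succ j) = v j := rfl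

theorem lift_abs {m : ℕ} (v w : Fin (m + 1) → ℝ) (K : ℝ) (hK : 0 ≤ K)
    (h : ∀ j, |v j - w j| ≤ K) (i) : |lift v i - lift w i| ≤ K := by
  refine Fin.cases ?_ (fun j => ?_) i
  · simpa using hK
  · simpa using h j

section
variable {X : Type*} [MetricSpace X]

open Classical in
/-- Truncated distance to the complement. -/
noncomputable def D (r : ℝ) (U : Set X) (x : X) : ℝ :=
  if Uᶜ = ∅ then r else min r (Metric.infDist x Uᶜ)

theorem infDist_abs (s : Set X) (x y : X) :
    |Metric.infDist x s - Metric.infDist y s| ≤ dist x y := by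
  have h1 := Metric.infDist_le_infDist_add_dist (s := s) (x := x) (y := y)
  have h2 := Metric.infDist_le_infDist_add_dist (s := s) (x := y) (y := x)
  rw [dist_comm y x] at h2
  rw [abs_le]; constructor <;> linarith

theorem min_abs (r a b : ℝ) : |min r a - min r b| ≤ |a - b| := by
  have := abs_min_sub_min_le_max r a r b
  simpa using this

theorem D_lip (r : ℝ) (U : Set X) (x y : X) : |D r U x - D r U y| ≤ dist x y := by
  unfold D
  split_ifs
  · simp
  · exact (min_abs _ _ _).trans (infDist_abs _ _ _)

theorem D_nonneg (r : ℝ) (hr : 0 ≤ r) (U : Set X) (x : X) : 0 ≤ D r U x := by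
  unfold D
  split_ifs
  · exact hr
  · exact le_min hr Metric.infDist_nonneg

theorem D_le (r : ℝ) (U : Set X) (x : X) : D r U x ≤ r := by
  unfold D
  split_ifs
  · exact le_rfl
  · exact min_le_left _ _

theorem D_zero (r : ℝ) (hr : 0 ≤ r) (U : Set X) (x : X) (h : x ∉ U) : D r U x = 0 := by
  unfold D
  rw [if_neg (Set.nonempty_iff_ne_empty.1 ⟨x, h⟩), Metric.infDist_zero_of_mem (show x ∈ Uᶜ from h)]
  exact min_eq_right hr

theorem D_full (r : ℝ) (U : Set X) (x : X) (h : Metric.ball x r ⊆ U) : D r U x = r := by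
  unfold D
  split_ifs with hU
  · rfl
  · apply min_eq_left
    rw [Metric.le_infDist (Set.nonempty_iff_ne_empty.2 hU)]
    intro y hy
    by_contra hlt
    push Not at hlt
    exact hy (h (by rwa [Metric.mem_ball, dist_comm]))

/-- The one-scale form of the covering condition. -/
def CoverCond (X : Type*) [MetricSpace X] (m : ℕ) (t : ℝ) : Prop :=
  ∀ r : ℝ, 0 < r → ∀ U : Fin (m + 2) → Set X, (∀ x : X, ∃ i, Metric.ball x r ⊆ U i) →
    ∃ V : Fin (m + 2) → Set X, (∀ i, IsOpen (V i)) ∧ (∀ i, V i ⊆ U i) ∧ (∀ x, ∃ i, x ∉ V i) ∧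
      ∀ x, ∃ i, Metric.ball x (t * r) ⊆ V i

theorem coverCond_of (m : ℕ) (t : ℝ) (ht : 0 < t)
    (H : ∀ U : Fin (m + 2) → Set X, (∀ x : X, ∃ i, x ∈ U i) →
        ∃ V : Set (Set X),
          (∀ x : X, ∃ W ∈ V, x ∈ W) ∧
          (∀ W ∈ V, ∃ i, W ⊆ U i) ∧
          MultiplicityLE V (m + 1) ∧
          ∀ r : ℝ, 0 < r → (∀ x : X, ∃ i, Metric.ball x r ⊆ U i) →
            ∀ x : X, ∃ W ∈ V, Metric.ball x (t * r) ⊆ W) : CoverCond X m t := by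
  intro r hr U hU
  obtain ⟨V, -, hVU, hm, hL⟩ := H U (fun x => by
    obtain ⟨i, hi⟩ := hU x
    exact ⟨i, hi (Metric.mem_ball_self hr)⟩)
  choose! ι hι using hVU
  refine ⟨fun i => ⋃ W ∈ {W | W ∈ V ∧ ι W = i}, interior W, ?_, ?_, ?_, ?_⟩
  · intro i
    exact isOpen_biUnion (fun W _ => isOpen_interior)
  · intro i
    apply Set.iUnion₂_subset
    rintro W ⟨hW, rfl⟩
    exact interior_subset.trans (hι W hW)
  · intro x
    by_contra hcon
    push Not at hcon
    simp only [Set.mem_iUnion, Set.mem_setOf_eq, exists_prop] at hcon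
    choose W hW hxW using hcon
    have hinj : Function.Injective W := by
      intro i j hij
      rw [← (hW i).2, ← (hW j).2, hij]
    have hsub : Set.range W ⊆ {W | W ∈ V ∧ x ∈ interior W} := by
      rintro _ ⟨i, rfl⟩
      exact ⟨(hW i).1, hxW i⟩
    have h1 := Set.ncard_le_ncard hsub (hm x).1
    have h2 := (hm x).2
    rw [← Set.image_univ, Set.ncard_image_of_injective _ hinj, Set.ncard_univ] at h1
    simp at h1
    omega
  · intro x
    obtain ⟨W, hW, hb⟩ := hL r hr hU x
    refine ⟨ι W, ?_⟩
    have : Metric.ball x (t * r) ⊆ interior W := interior_maximal hb Metric.isOpen_ball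
    refine this.trans ?_
    exact Set.subset_biUnion_of_mem (u := fun W => interior W) (show W ∈ {Z | Z ∈ V ∧ ι Z = ι W} from ⟨hW, rfl⟩)

theorem of_coverCond (m : ℕ) (t : ℝ) (ht : 0 < t) (H : CoverCond X m t)
    (U : Fin (m + 2) → Set X) (hU : ∀ x : X, ∃ i, x ∈ U i) :
        ∃ V : Set (Set X),
          (∀ x : X, ∃ W ∈ V, x ∈ W) ∧
          (∀ W ∈ V, ∃ i, W ⊆ U i) ∧
          MultiplicityLE V (m + 1) ∧
          ∀ r : ℝ, 0 < r → (∀ x : X, ∃ i, Metric.ball x r ⊆ U i) →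
            ∀ x : X, ∃ W ∈ V, Metric.ball x (t / 2 * r) ⊆ W := by
  by_cases huniv : ∃ i, U i = Set.univ
  · obtain ⟨i, hi⟩ := huniv
    refine ⟨{Set.univ}, fun x => ⟨_, rfl, trivial⟩, ?_, ?_, ?_⟩
    · rintro W rfl
      exact ⟨i, hi.ge⟩
    · intro x
      have hsub : {W : Set X | W ∈ ({Set.univ} : Set (Set X)) ∧ x ∈ interior W} ⊆ {Set.univ} :=
        fun W hW => hW.1
      refine ⟨(Set.finite_singleton _).subset hsub, ?_⟩
      have := Set.ncard_le_ncard hsub (Set.finite_singleton _)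
      rw [Set.ncard_singleton] at this
      omega
    · intro r _ _ x
      exact ⟨_, rfl, Set.subset_univ _⟩
  push Not at huniv
  by_cases hR : (∃ r : ℝ, 0 < r ∧ ∀ x : X, ∃ i, Metric.ball x r ⊆ U i) ∧ Nonempty X
  · obtain ⟨⟨r1, hr1, hr1U⟩, ⟨x0⟩⟩ := hR
    let R : Set ℝ := {r : ℝ | 0 < r ∧ ∀ x : X, ∃ i, Metric.ball x r ⊆ U i}
    have hy : ∀ i, ∃ y, y ∉ U i := fun i => (Set.ne_univ_iff_exists_notMem _).1 (huniv i)
    choose y hy using hy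
    have hbd : BddAbove R := by
      refine ⟨∑ i, dist (y i) x0, ?_⟩
      rintro r ⟨hr, hrU⟩
      obtain ⟨i, hi⟩ := hrU x0
      have h1 : r ≤ dist (y i) x0 := by
        by_contra hlt
        push Not at hlt
        exact hy i (hi hlt)
      exact h1.trans (Finset.single_le_sum (f := fun i => dist (y i) x0)
        (fun i _ => dist_nonneg) (Finset.mem_univ i))
    have hr1R : r1 ∈ R := ⟨hr1, hr1U⟩
    have hS : 0 < sSup R := hr1.trans_le (le_csSup hbd hr1R)
    obtain ⟨r0, ⟨hr0, hr0U⟩, hlt⟩ := exists_lt_of_lt_csSup ⟨r1, hr1R⟩ (half_lt_self hS)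
    obtain ⟨V, hVo, hVU, hVm, hVL⟩ := H r0 hr0 U hr0U
    refine ⟨Set.range V, ?_, ?_, ?_, ?_⟩
    · intro x
      obtain ⟨i, hi⟩ := hVL x
      exact ⟨V i, ⟨i, rfl⟩, hi (Metric.mem_ball_self (by positivity))⟩
    · rintro _ ⟨i, rfl⟩
      exact ⟨i, hVU i⟩
    · intro x
      obtain ⟨k, hk⟩ := hVm x
      have hsub : {W : Set X | W ∈ Set.range V ∧ x ∈ interior W} ⊆
          V '' ((Finset.univ.erase k : Finset (Fin (m + 2))) : Set (Fin (m + 2))) := by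
        rintro _ ⟨⟨i, rfl⟩, hx⟩
        refine ⟨i, ?_, rfl⟩
        have : i ≠ k := by
          rintro rfl
          exact hk (interior_subset hx)
        simpa using this
      have hfin : (V '' ((Finset.univ.erase k : Finset (Fin (m + 2))) : Set (Fin (m + 2)))).Finite :=
        (Finset.finite_toSet _).image _
      refine ⟨hfin.subset hsub, (Set.ncard_le_ncard hsub hfin).trans
        ((Set.ncard_image_le (Finset.finite_toSet _)).trans ?_)⟩
      rw [Set.ncard_coe_finset, Finset.card_erase_of_mem (Finset.mem_univ _)]
      simp
    · intro r hr hrU x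
      obtain ⟨i, hi⟩ := hVL x
      refine ⟨V i, ⟨i, rfl⟩, (Metric.ball_subset_ball ?_).trans hi⟩
      have : r ≤ sSup R := le_csSup hbd ⟨hr, hrU⟩
      nlinarith
  · refine ⟨Set.range (fun x : X => ({x} : Set X)), ?_, ?_, ?_, ?_⟩
    · intro x
      exact ⟨{x}, ⟨x, rfl⟩, rfl⟩
    · rintro _ ⟨x, rfl⟩
      obtain ⟨i, hi⟩ := hU x
      exact ⟨i, Set.singleton_subset_iff.2 hi⟩
    · intro x
      have hsub : {W : Set X | W ∈ Set.range (fun x : X => ({x} : Set X)) ∧ x ∈ interior W} ⊆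
          {{x}} := by
        rintro _ ⟨⟨y, rfl⟩, hx⟩
        have := interior_subset hx
        simp only [Set.mem_singleton_iff] at this
        subst this
        rfl
      refine ⟨(Set.finite_singleton _).subset hsub, ?_⟩
      have := Set.ncard_le_ncard hsub (Set.finite_singleton _)
      rw [Set.ncard_singleton] at this
      omega
    · intro r hr hrU x
      exact absurd ⟨⟨r, hr, hrU⟩, ⟨x⟩⟩ hR

theorem forward (m : ℕ)
    (H : LipschitzExtensorOf X (Metric.sphere (0 : EuclideanSpace ℝ (Fin (m + 1))) 1)) :
    ∃ t : ℝ, 0 < t ∧ CoverCond X m t := by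
  obtain ⟨C, hC, H⟩ := H
  refine ⟨1 / (16 * C * (m + 1) ^ 2), by positivity, ?_⟩
  intro r hr U hU
  let φ : X → Fin (m + 2) → ℝ := fun x i => D r (U i) x
  let A : Set X := {x | ∃ i, φ x i = 0}
  have hbig : ∀ x, ∃ i, r ≤ φ x i := fun x => by
    obtain ⟨i, hi⟩ := hU x
    exact ⟨i, (D_full r _ x hi).ge⟩
  rcases A.eq_empty_or_nonempty with hA | hA
  · have hUu : ∀ i x, x ∈ U i := by
      intro i x
      by_contra hx
      have : x ∈ A := ⟨i, D_zero r hr.le _ _ hx⟩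
      rw [hA] at this
      exact this
    refine ⟨fun i => if i = 0 then Set.univ else ∅, ?_, ?_, ?_, ?_⟩
    · intro i
      dsimp only
      split_ifs
      · exact isOpen_univ
      · exact isOpen_empty
    · intro i x _
      exact hUu i x
    · intro x
      exact ⟨1, by simp⟩
    · intro x
      exact ⟨0, by simp⟩
  obtain ⟨g, hgA, hg⟩ := H A hA (8 * (m + 1) / r) (by positivity)
    (fun a => ⟨nz (φ a), nz_norm (φ a) r hr a.2 (hbig a)⟩) (by
      intro a b
      exact nz_dist (φ a) (φ b) r _ hr a.2 (hbig a) b.2 (hbig b) (fun i => D_lip r _ _ _))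
  let G : X → Fin (m + 2) → ℝ := fun x => red (lift (g x).1)
  have hGlip : ∀ x y i, |G x i - G y i| ≤ 2 * (C * (8 * (m + 1) / r) * dist x y) := by
    intro x y i
    apply red_lip
    apply lift_abs _ _ _ (by positivity)
    intro j
    refine le_trans ?_ (hg x y)
    rw [Subtype.dist_eq, dist_eq_norm]
    exact coord_le_norm ((g x).1 - (g y).1) j
  refine ⟨fun i => {x | 0 < G x i}, ?_, ?_, ?_, ?_⟩
  · intro i
    rw [Metric.isOpen_iff]
    intro x hx
    simp only [Set.mem_setOf_eq] at hx
    refine ⟨G x i / (2 * (C * (8 * (m + 1) / r))), by positivity, ?_⟩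
    intro y hy
    have h1 := (abs_le.1 (hGlip y x i)).1
    rw [Metric.mem_ball, lt_div_iff₀ (by positivity)] at hy
    simp only [Set.mem_setOf_eq]
    nlinarith
  · intro i x hx
    simp only [Set.mem_setOf_eq] at hx
    by_contra hxU
    have hφ : φ x i = 0 := D_zero r hr.le _ _ hxU
    have hxA : x ∈ A := ⟨i, hφ⟩
    have hgx : (g x).1 = nz (φ x) := by rw [hgA ⟨x, hxA⟩]
    have hform : ∀ k, lift (g x).1 k = ‖Lm (φ x)‖⁻¹ * (φ x k - φ x 0) := by
      intro k
      rw [hgx]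
      refine Fin.cases ?_ (fun j => ?_) k
      · simp
      · simp [nz, Lm_apply]
    obtain ⟨k, hk⟩ := mn_eq (lift (g x).1.ofLp)
    have : G x i = ‖Lm (φ x)‖⁻¹ * (φ x i - φ x k) := by
      change lift (g x).1 i - mn (lift (g x).1) = _
      rw [hk, hform, hform]; ring
    have h2 : 0 ≤ φ x k := D_nonneg r hr.le _ _
    have h3 : (0 : ℝ) ≤ ‖Lm (φ x)‖⁻¹ := by positivity
    rw [this, hφ] at hx
    nlinarith
  · intro x
    obtain ⟨i, hi⟩ := red_zero (lift (g x).1.ofLp)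
    exact ⟨i, fun h => (ne_of_gt h) hi⟩
  · intro x
    obtain ⟨j, hj⟩ := exists_big_coord (g x).1 (by simpa using (g x).2)
    obtain ⟨i, hi⟩ := red_big (lift (g x).1.ofLp) _ (lift_zero _) j.succ hj
    refine ⟨i, ?_⟩
    intro y hy
    have hi : 1 / ((m : ℝ) + 1) ≤ G x i := hi
    have h1 := (abs_le.1 (hGlip y x i)).1
    rw [Metric.mem_ball] at hy
    have h2 : 2 * (C * (8 * (m + 1) / r) * dist y x) <
        2 * (C * (8 * (m + 1) / r) * (1 / (16 * C * (m + 1) ^ 2) * r)) := by gcongr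
    have h3 : 2 * (C * (8 * ((m : ℝ) + 1) / r) * (1 / (16 * C * (m + 1) ^ 2) * r)) =
      1 / ((m : ℝ) + 1) := by field_simp; norm_num
    simp only [Set.mem_setOf_eq]
    linarith

theorem mcshane (m : ℕ) (A : Set X) (lam : ℝ) (hl : 0 < lam)
    (f : A → EuclideanSpace ℝ (Fin (m + 1))) (hf1 : ∀ a, ‖f a‖ = 1)
    (hf : ∀ a b : A, dist (f a) (f b) ≤ lam * dist (a : X) (b : X)) :
    ∃ F : X → Fin (m + 1) → ℝ, (∀ (a : A) j, F a j = f a j) ∧ (∀ x j, |F x j| ≤ 1) ∧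
      ∀ x y j, |F x j - F y j| ≤ lam * dist x y := by
  classical
  have key : ∀ j : Fin (m + 1), ∃ g : X → ℝ, (∀ a : A, g a = f a j) ∧ (∀ x, |g x| ≤ 1) ∧
      ∀ x y, |g x - g y| ≤ lam * dist x y := by
    intro j
    have hL : LipschitzOnWith ⟨lam, hl.le⟩ (fun x => if h : x ∈ A then f ⟨x, h⟩ j else 0) A := by
      apply LipschitzOnWith.of_dist_le_mul
      intro x hx y hy
      simp only [hx, hy, dif_pos]
      refine le_trans ?_ (hf ⟨x, hx⟩ ⟨y, hy⟩)
      rw [Real.dist_eq, dist_eq_norm]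
      exact coord_le_norm (f ⟨x, hx⟩ - f ⟨y, hy⟩) j
    obtain ⟨g, hg, hgA⟩ := hL.extend_real
    refine ⟨fun x => max (-1) (min 1 (g x)), ?_, ?_, ?_⟩
    · intro a
      have h1 : g a = f a j := by
        rw [← hgA a.2]; simp
      have h2 := coord_le_norm (f a) j
      rw [hf1, abs_le] at h2
      dsimp only
      rw [h1, min_eq_right h2.2, max_eq_right h2.1]
    · intro x
      rw [abs_le]
      exact ⟨le_max_left _ _, max_le (by norm_num) (min_le_left _ _)⟩
    · intro x y
      have h1 := hg.dist_le_mul x y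
      rw [Real.dist_eq] at h1
      have h2 := abs_max_sub_max_le_max (-1) (min 1 (g x)) (-1) (min 1 (g y))
      have h3 := min_abs 1 (g x) (g y)
      simp only [sub_self, abs_zero] at h2
      rw [max_eq_right (a := (0 : ℝ)) (abs_nonneg _)] at h2
      exact h2.trans (h3.trans h1)
  choose g hg1 hg2 hg3 using key
  exact ⟨fun x j => g j x, fun a j => hg1 j a, fun x j => hg2 j x, fun x y j => hg3 j x y⟩

theorem backward (m : ℕ) (t : ℝ) (ht : 0 < t) (H : CoverCond X m t) :
    LipschitzExtensorOf X (Metric.sphere (0 : EuclideanSpace ℝ (Fin (m + 1))) 1) := by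
  set n : ℝ := (m : ℝ) + 1 with hn
  have hn0 : 0 < n := by positivity
  refine ⟨32 * n ^ 2 * (2 + 12 * n + 8 * n / t), by positivity, ?_⟩
  intro A hA lam hlam f hf
  obtain ⟨F, hFA, hF1, hFl⟩ := mcshane m A lam hlam (fun a => (f a).1)
    (fun a => by simpa using (f a).2) hf
  let φ : X → Fin (m + 2) → ℝ := fun x => red (lift (F x))
  have hφlip : ∀ x y i, |φ x i - φ y i| ≤ 2 * (lam * dist x y) := fun x y i =>
    red_lip _ _ _ (lift_abs _ _ _ (by positivity) (hFl x y)) i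
  have hφ0 : ∀ x i, 0 ≤ φ x i := fun x i => red_nonneg _ _
  have hφ2 : ∀ x i, φ x i ≤ 2 := fun x i => red_le _ (fun i => by
    refine Fin.cases ?_ (fun j => ?_) i
    · simp
    · simpa using hF1 x j) i
  obtain ⟨δ, hδ⟩ : ∃ δ : ℝ, δ = 1 / (2 * n * lam) := ⟨_, rfl⟩
  have hδ0 : 0 < δ := by rw [hδ]; positivity
  have hlδ : lam * δ = 1 / (2 * n) := by rw [hδ]; field_simp
  have hnear : ∀ x, Metric.infDist x A < δ → ∃ i, 1 / (2 * n) ≤ φ x i := by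
    intro x hx
    obtain ⟨a, ha, hxa⟩ := (Metric.infDist_lt_iff hA).1 hx
    obtain ⟨j, hj⟩ := exists_big_coord (f ⟨a, ha⟩).1 (by simpa using (f ⟨a, ha⟩).2)
    apply red_big (lift (F x)) _ (lift_zero _) j.succ
    rw [lift_succ]
    have h1 := hFl x a j
    have h2 : F a j = (f ⟨a, ha⟩).1 j := hFA ⟨a, ha⟩ j
    rw [← h2] at hj
    have h3 : lam * dist x a ≤ lam * δ := by gcongr
    have h4 := abs_sub_abs_le_abs_sub (F a j) (F x j)
    rw [abs_sub_comm] at h4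
    have h5 : 1 / n = 1 / (2 * n) + 1 / (2 * n) := by field_simp; norm_num
    rw [← hn] at hj
    linarith
  let U : Fin (m + 2) → Set X := fun i => {x | 0 < φ x i ∨ δ / 2 < Metric.infDist x A}
  obtain ⟨V, -, hVU, hVm, hVL⟩ := H (δ / 4) (by positivity) U (by
    intro x
    rcases lt_or_ge (Metric.infDist x A) δ with hx | hx
    · obtain ⟨i, hi⟩ := hnear x hx
      refine ⟨i, fun y hy => Or.inl ?_⟩
      rw [Metric.mem_ball] at hy
      have h1 := (abs_le.1 (hφlip y x i)).1
      have h2 : lam * dist y x < lam * (δ / 4) := by gcongr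
      have h3 : 0 < 1 / (2 * n) := by positivity
      linarith
    · refine ⟨0, fun y hy => Or.inr ?_⟩
      rw [Metric.mem_ball] at hy
      have := (abs_le.1 (infDist_abs A y x)).1
      linarith)
  obtain ⟨q, hq⟩ : ∃ q : ℝ, q = t * (δ / 4) := ⟨_, rfl⟩
  have hq0 : 0 < q := by rw [hq]; positivity
  rw [← hq] at hVL
  let ψ : X → Fin (m + 2) → ℝ := fun x i => D q (V i) x / q
  have hψ0 : ∀ x i, 0 ≤ ψ x i := fun x i => div_nonneg (D_nonneg _ hq0.le _ _) hq0.le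
  have hψ1 : ∀ x i, ψ x i ≤ 1 := fun x i => (div_le_one hq0).2 (D_le _ _ _)
  have hψlip : ∀ x y i, |ψ x i - ψ y i| ≤ dist x y / q := by
    intro x y i
    change |D q (V i) x / q - D q (V i) y / q| ≤ _
    rw [← sub_div, abs_div, abs_of_pos hq0]
    gcongr
    exact D_lip _ _ _ _
  have hψz : ∀ x i, x ∉ V i → ψ x i = 0 := by
    intro x i h
    change D q (V i) x / q = 0
    rw [D_zero q hq0.le _ _ h, zero_div]
  let s : X → ℝ := fun x => min 1 (Metric.infDist x A / (δ / 2))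
  have hs0 : ∀ x, 0 ≤ s x := fun x => le_min zero_le_one (div_nonneg Metric.infDist_nonneg (by positivity))
  have hs1 : ∀ x, s x ≤ 1 := fun x => min_le_left _ _
  have hslip : ∀ x y, |s x - s y| ≤ dist x y / (δ / 2) := by
    intro x y
    refine (min_abs _ _ _).trans ?_
    rw [← sub_div, abs_div, abs_of_pos (half_pos hδ0)]
    gcongr
    exact infDist_abs _ _ _
  let χ : X → Fin (m + 2) → ℝ := fun x i => (1 - s x) * φ x i + s x * ψ x i
  have hχ0 : ∀ x, ∃ i, χ x i = 0 := by
    intro x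
    rcases le_or_gt (Metric.infDist x A) (δ / 2) with hx | hx
    · obtain ⟨k, hk⟩ := red_zero (lift (F x))
      have hk : φ x k = 0 := hk
      refine ⟨k, ?_⟩
      have : x ∉ V k := by
        intro h
        rcases hVU k h with h | h
        · linarith
        · linarith
      change (1 - s x) * φ x k + s x * ψ x k = 0
      rw [hk, hψz x k this]; ring
    · obtain ⟨k, hk⟩ := hVm x
      refine ⟨k, ?_⟩
      have : s x = 1 := min_eq_left (by rw [le_div_iff₀ (by positivity)]; linarith)
      change (1 - s x) * φ x k + s x * ψ x k = 0
      rw [this, hψz x k hk]; ring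
  have hn1 : 1 ≤ n := by rw [hn]; linarith [(Nat.cast_nonneg m : (0 : ℝ) ≤ m)]
  have hχ1 : ∀ x, ∃ i, 1 / (4 * n) ≤ χ x i := by
    intro x
    rcases lt_or_ge (s x) (1 / 2) with hx | hx
    · have : Metric.infDist x A < δ := by
        by_contra hcon
        push Not at hcon
        have : s x = 1 := min_eq_left (by rw [le_div_iff₀ (by positivity)]; linarith)
        linarith
      obtain ⟨i, hi⟩ := hnear x this
      refine ⟨i, ?_⟩
      change _ ≤ (1 - s x) * φ x i + s x * ψ x i
      have h1 := mul_nonneg (hs0 x) (hψ0 x i)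
      have h2 : 1 / 2 * (1 / (2 * n)) ≤ (1 - s x) * φ x i := by
        exact mul_le_mul (by linarith) hi (by positivity) (by linarith [hs1 x])
      have h3 : 1 / 2 * (1 / (2 * n)) = 1 / (4 * n) := by field_simp; norm_num
      linarith
    · obtain ⟨i, hi⟩ := hVL x
      refine ⟨i, ?_⟩
      have h1 : ψ x i = 1 := by
        change D q (V i) x / q = 1
        rw [D_full q _ _ hi, div_self hq0.ne']
      change _ ≤ (1 - s x) * φ x i + s x * ψ x i
      have h2 := mul_nonneg (sub_nonneg.2 (hs1 x)) (hφ0 x i)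
      have h3 : 1 / (4 * n) ≤ 1 / 2 := by
        apply one_div_le_one_div_of_le <;> linarith
      rw [h1]
      linarith
  have hχlip : ∀ x y i, |χ x i - χ y i| ≤ lam * (2 + 12 * n + 8 * n / t) * dist x y := by
    intro x y i
    have e : χ x i - χ y i = (1 - s x) * (φ x i - φ y i) + (s y - s x) * φ y i
        + s x * (ψ x i - ψ y i) + (s x - s y) * ψ y i := by
      change (1 - s x) * φ x i + s x * ψ x i - ((1 - s y) * φ y i + s y * ψ y i) = _
      ring
    have h1 : |(1 - s x) * (φ x i - φ y i)| ≤ 1 * (2 * (lam * dist x y)) := by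
      rw [abs_mul, abs_of_nonneg (sub_nonneg.2 (hs1 x))]
      exact mul_le_mul (by linarith [hs0 x]) (hφlip x y i) (abs_nonneg _) zero_le_one
    have h2 : |(s y - s x) * φ y i| ≤ dist x y / (δ / 2) * 2 := by
      rw [abs_mul, abs_of_nonneg (hφ0 y i), abs_sub_comm]
      exact mul_le_mul (hslip x y) (hφ2 y i) (hφ0 y i) (by positivity)
    have h3 : |s x * (ψ x i - ψ y i)| ≤ 1 * (dist x y / q) := by
      rw [abs_mul, abs_of_nonneg (hs0 x)]
      exact mul_le_mul (hs1 x) (hψlip x y i) (abs_nonneg _) zero_le_one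
    have h4 : |(s x - s y) * ψ y i| ≤ dist x y / (δ / 2) * 1 := by
      rw [abs_mul, abs_of_nonneg (hψ0 y i)]
      exact mul_le_mul (hslip x y) (hψ1 y i) (hψ0 y i) (by positivity)
    have h5 : 1 * (2 * (lam * dist x y)) + dist x y / (δ / 2) * 2 + 1 * (dist x y / q) +
        dist x y / (δ / 2) * 1 = lam * (2 + 12 * n + 8 * n / t) * dist x y := by
      rw [hq, hδ]
      field_simp
      ring
    rw [e, ← h5]
    refine (abs_add_le _ _).trans (add_le_add ((abs_add_le _ _).trans
      (add_le_add ((abs_add_le _ _).trans (add_le_add h1 h2)) h3)) h4)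
  refine ⟨fun x => ⟨nz (χ x), nz_norm (χ x) (1 / (4 * n)) (by positivity) (hχ0 x) (hχ1 x)⟩, ?_, ?_⟩
  · intro a
    apply Subtype.ext
    have hsa : s a = 0 := by
      change min 1 (Metric.infDist (a : X) A / (δ / 2)) = 0
      rw [Metric.infDist_zero_of_mem a.2]; simp
    have hχa : χ a = red (lift (F a)) := by
      funext i
      change (1 - s a) * φ a i + s a * ψ a i = _
      rw [hsa]; simp [φ]
    have hL : Lm (χ a) = (f a).1 := by
      rw [hχa, Lm_red]
      ext j
      rw [Lm_apply, lift_succ, lift_zero, sub_zero, hFA a j]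
    have h1 : ‖(f a).1‖ = 1 := by simpa using (f a).2
    change ‖Lm (χ a)‖⁻¹ • Lm (χ a) = (f a).1
    rw [hL, h1]; simp
  · intro x y
    have := nz_dist (χ x) (χ y) (1 / (4 * n)) _ (by positivity) (hχ0 x) (hχ1 x) (hχ0 y) (hχ1 y)
      (hχlip x y)
    rw [Subtype.dist_eq]
    refine this.trans (le_of_eq ?_)
    rw [← hn]
    field_simp
    ring

end

end SphereExt

theorem sphere_extensor_iff_cover_refinement
    {X : Type*} [MetricSpace X] (m : ℕ) :
    LipschitzExtensorOf X (Metric.sphere (0 : EuclideanSpace ℝ (Fin (m + 1))) 1) ↔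
      ∃ t : ℝ, 0 < t ∧ ∀ U : Fin (m + 2) → Set X, (∀ x : X, ∃ i, x ∈ U i) →
        ∃ V : Set (Set X),
          (∀ x : X, ∃ W ∈ V, x ∈ W) ∧
          (∀ W ∈ V, ∃ i, W ⊆ U i) ∧
          MultiplicityLE V (m + 1) ∧
          ∀ r : ℝ, 0 < r → (∀ x : X, ∃ i, Metric.ball x r ⊆ U i) →
            ∀ x : X, ∃ W ∈ V, Metric.ball x (t * r) ⊆ W := by
  constructor
  · intro H
    obtain ⟨t, ht, hc⟩ := SphereExt.forward m H
    exact ⟨t / 2, by positivity, SphereExt.of_coverCond m t ht hc⟩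
  · rintro ⟨t, ht, H⟩
    exact SphereExt.backward m t ht (SphereExt.coverCond_of m t ht H)
end

section
/- For a metric space X and integer m ≥ 0 the following are equivalent: (a) S^m is a large scale Lipschitz extensor of X; (b) there are constants t, M > 0 such that every cover U = {U_0,…,U_{m+1}} of X by m+2 subsets which is r-Lebesgue for some r > M admits a (t·r)-Lebesgue refinement V of multiplicity at most m+1. -/
/-- A metric space `E` is a large scale Lipschitz extensor of `X`: there are `C, M > 0` such
that every `λ`-Lipschitz map on a nonempty subset of `X` with `0 < λ < M` extends to a
`(C·λ)`-Lipschitz map on `X`. -/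
def LargeScaleLipschitzExtensorOf (X E : Type*) [MetricSpace X] [MetricSpace E] : Prop :=
  ∃ C : ℝ, 0 < C ∧ ∃ M : ℝ, 0 < M ∧ ∀ A : Set X, A.Nonempty →
    ∀ lam : ℝ, 0 < lam → lam < M →
      ∀ f : A → E, (∀ a b : A, dist (f a) (f b) ≤ lam * dist (a : X) (b : X)) →
        ∃ g : X → E, (∀ a : A, g a = f a) ∧
          ∀ x y : X, dist (g x) (g y) ≤ C * lam * dist x y

/-- A metric space `E` is a small scale Lipschitz extensor of `X`: there are `C, M > 0` such
that every `λ`-Lipschitz map on a nonempty subset of `X` with `λ > M` extends to a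
`(C·λ)`-Lipschitz map on `X`. -/
def SmallScaleLipschitzExtensorOf (X E : Type*) [MetricSpace X] [MetricSpace E] : Prop :=
  ∃ C : ℝ, 0 < C ∧ ∃ M : ℝ, 0 < M ∧ ∀ A : Set X, A.Nonempty →
    ∀ lam : ℝ, M < lam →
      ∀ f : A → E, (∀ a b : A, dist (f a) (f b) ≤ lam * dist (a : X) (b : X)) →
        ∃ g : X → E, (∀ a : A, g a = f a) ∧
          ∀ x y : X, dist (g x) (g y) ≤ C * lam * dist x y
namespace SphereExt

open Finset

abbrev Eu (m : ℕ) := EuclideanSpace ℝ (Fin (m + 1))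

noncomputable def ell {m : ℕ} (v : Eu m) (i : Fin (m + 2)) : ℝ :=
  Fin.lastCases (motive := fun _ => ℝ) (-∑ j, v j) (fun j => v j) i

lemma ell_last {m : ℕ} (v : Eu m) : ell v (Fin.last (m + 1)) = -∑ j, v j := by
  simp [ell]

lemma ell_castSucc {m : ℕ} (v : Eu m) (j : Fin (m + 1)) : ell v j.castSucc = v j := by
  simp [ell]

lemma ell_sub {m : ℕ} (v w : Eu m) (i : Fin (m + 2)) : ell (v - w) i = ell v i - ell w i := by
  induction i using Fin.lastCases with
  | last => simp [ell_last]; ring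
  | cast j => simp [ell_castSucc]

lemma ell_smul {m : ℕ} (c : ℝ) (v : Eu m) (i : Fin (m + 2)) : ell (c • v) i = c * ell v i := by
  induction i using Fin.lastCases with
  | last => simp [ell_last, Finset.mul_sum]
  | cast j => simp [ell_castSucc]

lemma sum_ell {m : ℕ} (v : Eu m) : ∑ i, ell v i = 0 := by
  rw [Fin.sum_univ_castSucc]
  simp [ell_last, ell_castSucc]

lemma abs_coord_le {m : ℕ} (v : Eu m) (j : Fin (m + 1)) : |v j| ≤ ‖v‖ := by
  simpa using PiLp.norm_apply_le v j

lemma abs_ell_le {m : ℕ} (v : Eu m) (i : Fin (m + 2)) : |ell v i| ≤ (m + 1) * ‖v‖ := by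
  induction i using Fin.lastCases with
  | last =>
    rw [ell_last, abs_neg]
    calc |∑ j, v j| ≤ ∑ j, |v j| := Finset.abs_sum_le_sum_abs _ _
      _ ≤ ∑ j : Fin (m + 1), ‖v‖ := Finset.sum_le_sum fun j _ => abs_coord_le v j
      _ = _ := by simp
  | cast j =>
    rw [ell_castSucc]
    have := abs_coord_le v j
    have h0 := norm_nonneg v
    have : (0:ℝ) ≤ m := Nat.cast_nonneg m
    nlinarith

lemma norm_le_sum {m : ℕ} (v : Eu m) : ‖v‖ ≤ ∑ j, |v j| := by
  have h0 : 0 ≤ ∑ j, |v j| := Finset.sum_nonneg fun j _ => abs_nonneg _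
  rw [EuclideanSpace.norm_eq]
  apply Real.sqrt_le_iff.2 ⟨h0, ?_⟩
  simpa using Finset.sum_sq_le_sq_sum_of_nonneg (s := Finset.univ) (f := fun j => |v j|) (fun j _ => abs_nonneg _)

/-- gauge -/
noncomputable def mu {m : ℕ} (v : Eu m) : ℝ :=
  Finset.univ.sup' Finset.univ_nonempty (fun i => -ell v i)

lemma neg_ell_le_mu {m : ℕ} (v : Eu m) (i : Fin (m + 2)) : -ell v i ≤ mu v :=
  Finset.le_sup' (fun i => -ell v i) (Finset.mem_univ i)

lemma exists_mu {m : ℕ} (v : Eu m) : ∃ i, mu v = -ell v i := by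
  obtain ⟨i, -, h⟩ := Finset.exists_mem_eq_sup' Finset.univ_nonempty (fun i => -ell v i)
  exact ⟨i, h⟩

lemma mu_lip {m : ℕ} (v w : Eu m) : |mu v - mu w| ≤ (m + 1) * ‖v - w‖ := by
  have key : ∀ v w : Eu m, mu v - mu w ≤ (m + 1) * ‖v - w‖ := by
    intro v w
    obtain ⟨i, hi⟩ := exists_mu v
    have h1 := neg_ell_le_mu w i
    have h2 := abs_ell_le (v - w) i
    rw [ell_sub] at h2
    have := neg_le_of_abs_le h2
    linarith
  rw [abs_le]
  have h1 := key v w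
  have h2 := key w v
  rw [norm_sub_rev] at h2
  constructor <;> linarith

lemma sum_ell_add {m : ℕ} (v : Eu m) (c : ℝ) : ∑ i, (ell v i + c) = (m + 2) * c := by
  rw [Finset.sum_add_distrib, sum_ell]
  simp

lemma norm_le_mu {m : ℕ} (v : Eu m) : 1 / (2 * (m + 2)) * ‖v‖ ≤ mu v := by
  have hm : (0:ℝ) ≤ m := Nat.cast_nonneg m
  have hs := sum_ell_add v (mu v)
  have hmu : 0 ≤ mu v := by
    have : 0 ≤ ∑ i, (ell v i + mu v) :=
      Finset.sum_nonneg fun i _ => by linarith [neg_ell_le_mu v i]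
    rw [hs] at this
    by_contra h
    push Not at h
    nlinarith
  have h1 : ∑ j, |v j| ≤ ∑ i, |ell v i| := by
    rw [Fin.sum_univ_castSucc (f := fun i => |ell v i|)]
    simp only [ell_castSucc]
    linarith [abs_nonneg (ell v (Fin.last (m + 1)))]
  have h2 : ∑ i, |ell v i| ≤ ∑ i, (ell v i + 2 * mu v) := by
    apply Finset.sum_le_sum
    intro i _
    have := neg_ell_le_mu v i
    rw [abs_le]
    constructor <;> linarith
  rw [sum_ell_add] at h2
  have := norm_le_sum v
  rw [div_mul_eq_mul_div, div_le_iff₀ (by positivity)]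
  linarith

noncomputable def Q {m : ℕ} (h : Fin (m + 2) → ℝ) : Eu m :=
  WithLp.toLp 2 (fun j => h j.castSucc - (∑ i, h i) / (m + 2))

lemma ell_Q {m : ℕ} (h : Fin (m + 2) → ℝ) (i : Fin (m + 2)) :
    ell (Q h) i = h i - (∑ i, h i) / (m + 2) := by
  induction i using Fin.lastCases with
  | last =>
    rw [ell_last]
    simp only [Q, Finset.sum_sub_distrib]
    rw [Fin.sum_univ_castSucc (f := h)]
    simp
    have : (m:ℝ) + 2 ≠ 0 := by positivity
    field_simp
    ring
  | cast j => simp [ell_castSucc, Q]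

lemma Q_lip {m : ℕ} (h k : Fin (m + 2) → ℝ) (D : ℝ) (hD : ∀ i, |h i - k i| ≤ D) :
    ‖Q h - Q k‖ ≤ 2 * (m + 1) * D := by
  have hm : (0:ℝ) ≤ m := Nat.cast_nonneg m
  have hs : |(∑ i, h i) / ((m:ℝ) + 2) - (∑ i, k i) / (m + 2)| ≤ D := by
    rw [← sub_div, ← Finset.sum_sub_distrib, abs_div, abs_of_pos (by positivity : (0:ℝ) < m + 2),
      div_le_iff₀ (by positivity)]
    calc |∑ i, (h i - k i)| ≤ ∑ i, |h i - k i| := Finset.abs_sum_le_sum_abs _ _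
      _ ≤ ∑ i : Fin (m + 2), D := Finset.sum_le_sum fun i _ => hD i
      _ = _ := by simp; ring
  calc ‖Q h - Q k‖ ≤ ∑ j, |(Q h - Q k) j| := norm_le_sum _
    _ ≤ ∑ j : Fin (m + 1), 2 * D := by
        apply Finset.sum_le_sum
        intro j _
        have e : (Q h - Q k) j = (h j.castSucc - k j.castSucc)
          - ((∑ i, h i) / ((m:ℝ) + 2) - (∑ i, k i) / (m + 2)) := by
          simp [Q]; ring
        rw [e]
        have := abs_sub (h j.castSucc - k j.castSucc)
          ((∑ i, h i) / ((m:ℝ) + 2) - (∑ i, k i) / (m + 2))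
        linarith [hD j.castSucc]
    _ = _ := by simp; ring

lemma Q_lower {m : ℕ} (h : Fin (m + 2) → ℝ) (i : Fin (m + 2)) (hi : h i = 0) :
    (∑ i, h i) / ((m + 2) * (m + 1)) ≤ ‖Q h‖ := by
  have h1 := abs_ell_le (Q h) i
  rw [ell_Q, hi] at h1
  have h2 := neg_le_of_abs_le h1
  rw [← div_div, div_le_iff₀ (by positivity)]
  linarith

noncomputable def Nc {m : ℕ} (c : ℝ) (v : Eu m) : Eu m := (max ‖v‖ c)⁻¹ • v

lemma Nc_lip {m : ℕ} (c : ℝ) (hc : 0 < c) (v w : Eu m) :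
    ‖Nc c v - Nc c w‖ ≤ 2 / c * ‖v - w‖ := by
  set a := max ‖v‖ c with ha
  set b := max ‖w‖ c with hb
  have hac : c ≤ a := le_max_right _ _
  have hbc : c ≤ b := le_max_right _ _
  have hwb : ‖w‖ ≤ b := le_max_left _ _
  have ha0 : 0 < a := lt_of_lt_of_le hc hac
  have hb0 : 0 < b := lt_of_lt_of_le hc hbc
  have hab : |b - a| ≤ ‖v - w‖ := by
    have h1 := abs_max_sub_max_le_abs ‖w‖ ‖v‖ c
    have h2 := abs_norm_sub_norm_le w v
    rw [norm_sub_rev] at h2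
    exact h1.trans h2
  have e : Nc c v - Nc c w = a⁻¹ • (v - w) + ((b - a) / (a * b)) • w := by
    have : (b - a) / (a * b) = a⁻¹ - b⁻¹ := by field_simp
    rw [this, smul_sub, sub_smul]
    simp only [Nc, ← ha, ← hb]
    abel
  rw [e]
  have h1 : ‖a⁻¹ • (v - w)‖ ≤ 1 / c * ‖v - w‖ := by
    rw [norm_smul, norm_inv, Real.norm_of_nonneg ha0.le, ← one_div]
    gcongr
  have h2 : ‖((b - a) / (a * b)) • w‖ ≤ 1 / c * ‖v - w‖ := by
    rw [norm_smul, norm_div, Real.norm_of_nonneg (by positivity : 0 ≤ a * b), Real.norm_eq_abs]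
    calc |b - a| / (a * b) * ‖w‖ ≤ ‖v - w‖ / (a * b) * b := by gcongr
      _ = 1 / a * ‖v - w‖ := by field_simp
      _ ≤ 1 / c * ‖v - w‖ := by gcongr
  calc _ ≤ _ := norm_add_le _ _
    _ ≤ 1 / c * ‖v - w‖ + 1 / c * ‖v - w‖ := add_le_add h1 h2
    _ = _ := by ring

lemma Nc_norm_le {m : ℕ} (c : ℝ) (hc : 0 < c) (v : Eu m) : ‖Nc c v‖ ≤ 1 := by
  have h : 0 < max ‖v‖ c := lt_of_lt_of_le hc (le_max_right _ _)
  rw [Nc, norm_smul, norm_inv, Real.norm_of_nonneg h.le, inv_mul_le_iff₀ h]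
  simp

lemma Nc_norm {m : ℕ} (c : ℝ) (hc : 0 < c) (v : Eu m) (hv : c ≤ ‖v‖) : ‖Nc c v‖ = 1 := by
  rw [Nc, max_eq_left hv, norm_smul, norm_inv, norm_norm]
  exact inv_mul_cancel₀ (by linarith)

lemma Nc_eq {m : ℕ} (c : ℝ) (hc : c ≤ 1) (v : Eu m) (hv : ‖v‖ = 1) : Nc c v = v := by
  rw [Nc, hv, max_eq_left hc]; simp

lemma Nc_ell {m : ℕ} (c : ℝ) (hc : 0 < c) (v : Eu m) :
    ∃ s, 0 ≤ s ∧ ∀ i, ell (Nc c v) i = s * ell v i := by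
  have h : 0 < max ‖v‖ c := lt_of_lt_of_le hc (le_max_right _ _)
  exact ⟨(max ‖v‖ c)⁻¹, by positivity, fun i => ell_smul _ _ _⟩

lemma depth {X : Type*} [MetricSpace X] (W : Set X) (r : ℝ) (hr : 0 < r) :
    ∃ a : X → ℝ, (∀ x, 0 ≤ a x) ∧ (∀ x, a x ≤ r) ∧ (∀ x y, |a x - a y| ≤ dist x y) ∧
      (∀ x, Metric.ball x r ⊆ W → a x = r) ∧ (∀ x, 0 < a x → x ∈ W) := by
  rcases Set.eq_empty_or_nonempty Wᶜ with h | h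
  · refine ⟨fun _ => r, fun _ => hr.le, fun _ => le_rfl, fun x y => by simp, fun _ _ => rfl, ?_⟩
    intro x _
    rw [Set.compl_empty_iff] at h
    simp [h]
  · refine ⟨fun x => min (Metric.infDist x Wᶜ) r, fun x => le_min Metric.infDist_nonneg hr.le,
      fun x => min_le_right _ _, fun x y => ?_, fun x hx => ?_, fun x hx => ?_⟩
    · refine (abs_min_sub_min_le_max _ _ _ _).trans ?_
      have := (Metric.lipschitz_infDist_pt Wᶜ).dist_le_mul x y
      rw [Real.dist_eq] at this
      simpa using this
    · apply min_eq_right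
      rw [Metric.le_infDist h]
      intro y hy
      by_contra hlt
      push Not at hlt
      exact hy (hx (by rwa [Metric.mem_ball, dist_comm]))
    · by_contra hn
      have : Metric.infDist x Wᶜ = 0 := Metric.infDist_zero_of_mem hn
      simp [this] at hx

end SphereExt

namespace SphereExt

abbrev CoverProp (X : Type*) [MetricSpace X] (m : ℕ) : Prop :=
  ∃ t : ℝ, 0 < t ∧ ∃ M : ℝ, 0 < M ∧ ∀ r : ℝ, M < r →
        ∀ U : Fin (m + 2) → Set X, (∀ x : X, ∃ i, Metric.ball x r ⊆ U i) →
          ∃ V : Set (Set X),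
            (∀ W ∈ V, ∃ i, W ⊆ U i) ∧
            MultiplicityLE V (m + 1) ∧
            (∀ x : X, ∃ W ∈ V, Metric.ball x (t * r) ⊆ W)

/-- The family `ell i + mu` is Lipschitz. -/
lemma ell_mu_lip {m : ℕ} (v w : Eu m) (i : Fin (m + 2)) :
    |(ell v i + mu v) - (ell w i + mu w)| ≤ 2 * (m + 1) * ‖v - w‖ := by
  have h1 := abs_ell_le (v - w) i
  have h2 := mu_lip v w
  rw [ell_sub] at h1
  have h3 := abs_add_le (ell v i - ell w i) (mu v - mu w)
  have e : (ell v i + mu v) - (ell w i + mu w) = (ell v i - ell w i) + (mu v - mu w) := by ring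
  rw [e]
  linarith

lemma exists_ge_avg {m : ℕ} (u : Fin (m + 2) → ℝ) (c : ℝ) (h : (m + 2) * c ≤ ∑ i, u i) :
    ∃ i, c ≤ u i := by
  by_contra hn
  push Not at hn
  have : ∑ i, u i < ∑ i : Fin (m + 2), c :=
    Finset.sum_lt_sum_of_nonempty Finset.univ_nonempty fun i _ => hn i
  simp at this
  linarith

theorem forward_s9 {X : Type*} [MetricSpace X] (m : ℕ)
    (H : LargeScaleLipschitzExtensorOf X (Metric.sphere (0 : EuclideanSpace ℝ (Fin (m + 1))) 1)) :
    CoverProp X m := by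
  obtain ⟨C, hC, M, hM, H⟩ := H
  have hm : (0:ℝ) ≤ m := Nat.cast_nonneg m
  set c : ℝ := 1 / ((m + 2) * (m + 1)) with hc
  have hc0 : 0 < c := by positivity
  set c2 : ℝ := 2 / c * (2 * (m + 1)) with hc2
  have hc20 : 0 < c2 := by positivity
  set c0 : ℝ := 1 / (2 * (m + 2)) with hc0d
  have hc00 : 0 < c0 := by positivity
  refine ⟨c0 / (2 * (m + 1) * (C * c2)), by positivity, c2 / M, by positivity, ?_⟩
  intro r hr U hU
  have hr0 : 0 < r := lt_trans (by positivity) hr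
  choose a ha0 har haL haB haU using fun i => depth (U i) r hr0
  set A : Set X := {x | ∃ i, a i x = 0} with hA
  have notA : ∀ x, x ∉ A → ∀ i, x ∈ U i := by
    intro x hx i
    apply haU
    refine lt_of_le_of_ne (ha0 i x) ?_
    intro h
    exact hx ⟨i, h.symm⟩
  rcases Set.eq_empty_or_nonempty A with hAe | hAn
  · refine ⟨{Set.univ}, ?_, ?_, ?_⟩
    · rintro W rfl
      exact ⟨0, fun x _ => notA x (by simp [hAe]) 0⟩
    · intro x
      have hs : {W : Set X | W ∈ ({Set.univ} : Set (Set X)) ∧ x ∈ interior W} ⊆ {Set.univ} :=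
        fun W hW => hW.1
      refine ⟨(Set.finite_singleton _).subset hs, ?_⟩
      have := Set.ncard_le_ncard hs (Set.finite_singleton _)
      rw [Set.ncard_singleton] at this
      omega
    · intro x
      exact ⟨Set.univ, rfl, Set.subset_univ _⟩
  · set h : X → Fin (m + 2) → ℝ := fun x i => a i x / r with hh
    have hsum : ∀ x, 1 ≤ ∑ i, h x i := by
      intro x
      obtain ⟨i, hi⟩ := hU x
      have e : h x i = 1 := by
        simp only [hh, haB i x hi]
        exact div_self hr0.ne'
      rw [← e]
      exact Finset.single_le_sum (f := h x) (fun j _ => div_nonneg (ha0 j x) hr0.le)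
        (Finset.mem_univ i)
    have hQ : ∀ x ∈ A, c ≤ ‖Q (h x)‖ := by
      rintro x ⟨i, hi⟩
      refine le_trans ?_ (Q_lower (h x) i (by simp [hh, hi]))
      rw [hc]
      gcongr
      exact hsum x
    have hlip : ∀ x y, ‖Nc c (Q (h x)) - Nc c (Q (h y))‖ ≤ c2 / r * dist x y := by
      intro x y
      refine (Nc_lip c hc0 _ _).trans ?_
      have := Q_lip (h x) (h y) (dist x y / r) (fun i => by
        simp only [hh]
        rw [← sub_div, abs_div, abs_of_pos hr0]
        gcongr
        exact haL i x y)
      calc 2 / c * ‖Q (h x) - Q (h y)‖ ≤ 2 / c * (2 * (m + 1) * (dist x y / r)) := by gcongr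
        _ = _ := by rw [hc2]; ring
    obtain ⟨g, hgA, hgL⟩ := H A hAn (c2 / r) (by positivity)
      (by rw [div_lt_iff₀ hr0]; rw [div_lt_iff₀ hM] at hr; linarith)
      (fun x => ⟨Nc c (Q (h x)), by
        rw [mem_sphere_zero_iff_norm]; exact Nc_norm c hc0 _ (hQ x x.2)⟩)
      (by
        intro x y
        rw [Subtype.dist_eq, dist_eq_norm]
        exact hlip x y)
    set F : X → Fin (m + 2) → ℝ := fun x i => ell (g x : Eu m) i + mu (g x : Eu m) with hF
    set Vi : Fin (m + 2) → Set X := fun i => {x | 0 < F x i} with hVi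
    have hgn : ∀ x, ‖(g x : Eu m)‖ = 1 := fun x => by
      simpa using (g x).2
    refine ⟨Set.range Vi, ?_, ?_, ?_⟩
    · rintro W ⟨i, rfl⟩
      refine ⟨i, fun x hx => ?_⟩
      by_cases hxA : x ∈ A
      · apply haU
        refine lt_of_le_of_ne (ha0 i x) ?_
        intro h0
        have e : (g x : Eu m) = Nc c (Q (h x)) := by
          have := hgA ⟨x, hxA⟩
          exact congrArg Subtype.val this
        obtain ⟨s, hs, hse⟩ := Nc_ell c hc0 (Q (h x))
        have hx' : 0 < ell (g x : Eu m) i + mu (g x : Eu m) := hx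
        rw [e] at hx'
        obtain ⟨k, hk⟩ := exists_mu (Nc c (Q (h x)))
        rw [hk, hse, hse, ell_Q, ell_Q] at hx'
        have h1 : h x i = 0 := by simp [hh, ← h0]
        have h2 : 0 ≤ h x k := div_nonneg (ha0 k x) hr0.le
        rw [h1] at hx'
        nlinarith [mul_nonneg hs h2]
      · exact notA x hxA i
    · intro x
      obtain ⟨k, hk⟩ := exists_mu (g x : Eu m)
      have hs : {W : Set X | W ∈ Set.range Vi ∧ x ∈ interior W} ⊆
          ((Finset.univ.erase k).image Vi : Finset (Set X)) := by
        rintro W ⟨⟨i, rfl⟩, hx⟩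
        have hx := interior_subset hx
        simp only [Finset.coe_image, Set.mem_image, Finset.mem_coe, Finset.mem_erase,
          Finset.mem_univ, and_true]
        refine ⟨i, ?_, rfl⟩
        rintro rfl
        have hx' : 0 < ell (g x : Eu m) i + mu (g x : Eu m) := hx
        linarith
      refine ⟨(Finset.finite_toSet _).subset hs, ?_⟩
      refine (Set.ncard_le_ncard hs (Finset.finite_toSet _)).trans ?_
      rw [Set.ncard_coe_finset]
      refine Finset.card_image_le.trans ?_
      rw [Finset.card_erase_of_mem (Finset.mem_univ k)]
      simp
    · intro x
      have hmu := norm_le_mu (g x : Eu m)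
      rw [hgn, mul_one] at hmu
      obtain ⟨i, hi⟩ := exists_ge_avg (F x) c0 (by
        simp only [hF]
        rw [sum_ell_add]
        gcongr)
      refine ⟨Vi i, ⟨i, rfl⟩, ?_⟩
      intro y hy
      rw [Metric.mem_ball, dist_comm] at hy
      have h1 := ell_mu_lip (g x : Eu m) (g y : Eu m) i
      have h2 := hgL x y
      rw [Subtype.dist_eq, dist_eq_norm] at h2
      have h3 : 2 * (m + 1) * ‖(g x : Eu m) - (g y : Eu m)‖ < c0 := by
        calc 2 * (m + 1) * ‖(g x : Eu m) - (g y : Eu m)‖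
            ≤ 2 * (m + 1) * (C * (c2 / r) * dist x y) := by gcongr
          _ < 2 * (m + 1) * (C * (c2 / r) * (c0 / (2 * (m + 1) * (C * c2)) * r)) := by gcongr
          _ = c0 := by field_simp
      have h4 := le_of_abs_le h1
      change 0 < F y i
      simp only [hF] at hi ⊢
      linarith

theorem backward_s9 {X : Type*} [MetricSpace X] (m : ℕ) (H : CoverProp X m) :
    LargeScaleLipschitzExtensorOf X (Metric.sphere (0 : EuclideanSpace ℝ (Fin (m + 1))) 1) := by
  obtain ⟨t, ht, M, hM, H⟩ := H
  have hm : (0:ℝ) ≤ m := Nat.cast_nonneg m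
  obtain ⟨K1, hK1, hext⟩ : ∃ K1 : ℝ, 0 < K1 ∧ ∀ (A : Set X) (lam : ℝ), 0 < lam →
      ∀ f : A → Metric.sphere (0 : EuclideanSpace ℝ (Fin (m + 1))) 1,
        (∀ a b : A, dist (f a) (f b) ≤ lam * dist (a : X) (b : X)) →
        ∃ f0 : X → Eu m, (∀ a : A, f0 a = f a) ∧ ∀ x y, ‖f0 x - f0 y‖ ≤ K1 * lam * dist x y := by
    refine ⟨lipschitzExtensionConstant (Eu m), lipschitzExtensionConstant_pos _, ?_⟩
    intro A lam hlam f hf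
    classical
    set F : X → Eu m := fun x => if hx : x ∈ A then (f ⟨x, hx⟩ : Eu m) else 0 with hF
    have hFl : LipschitzOnWith (Real.toNNReal lam) F A := by
      apply LipschitzOnWith.of_dist_le_mul
      intro x hx y hy
      simp only [hF, hx, hy, dif_pos]
      rw [Real.coe_toNNReal _ hlam.le]
      exact hf ⟨x, hx⟩ ⟨y, hy⟩
    obtain ⟨g, hg, hgA⟩ := hFl.extend_finite_dimension
    refine ⟨g, ?_, ?_⟩
    · intro a
      rw [← hgA a.2]
      simp [hF]
    · intro x y
      have := hg.dist_le_mul x y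
      rw [dist_eq_norm, NNReal.coe_mul, Real.coe_toNNReal _ hlam.le] at this
      exact this
  set c0 : ℝ := 1 / (2 * (m + 2)) with hc0d
  have hc00 : 0 < c0 := by positivity
  have hc01 : c0 ≤ 1 := by
    rw [hc0d, div_le_one (by positivity)]; linarith
  set K2 : ℝ := 4 * K1 with hK2
  set K3 : ℝ := (2 * (m + 1) + c0) * K2 with hK3
  have hK30 : 0 < K3 := by positivity
  set B : ℝ := 2 * (m + 1) + 1 with hB
  set D : ℝ := 2 * K3 + (1 + B) * (2 * K1) + K3 / (t * c0) with hD
  have hD0 : 0 < D := by positivity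
  set c1 : ℝ := 1 / (2 * (m + 2) * (m + 1)) with hc1
  have hc10 : 0 < c1 := by positivity
  have hc11 : c1 ≤ 1 := by
    rw [hc1, div_le_one (by positivity)]; nlinarith
  refine ⟨2 / c1 * (2 * (m + 1) * D), by positivity, c0 / (K3 * M), by positivity, ?_⟩
  intro A hAn lam hlam hlamM f hf
  obtain ⟨f0, hf0A, hf0L⟩ := hext A lam hlam f hf
  have hfn : ∀ a : A, ‖(f a : Eu m)‖ = 1 := fun a => by simpa using (f a).2
  set fb : X → Eu m := fun x => Nc (1 / 2) (f0 x) with hfb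
  have hfbL : ∀ x y, ‖fb x - fb y‖ ≤ K2 * lam * dist x y := by
    intro x y
    refine (Nc_lip (1 / 2) (by norm_num) _ _).trans ?_
    have := hf0L x y
    rw [hK2]
    norm_num
    linarith
  have hfb1 : ∀ x, ‖fb x‖ ≤ 1 := fun x => Nc_norm_le _ (by norm_num) _
  have hfbA : ∀ a : A, fb a = f a := by
    intro a
    simp only [hfb, hf0A]
    exact Nc_eq _ (by norm_num) _ (hfn a)
  -- the simplex coordinates
  set u : X → Fin (m + 2) → ℝ :=
    fun x i => (ell (fb x) i + mu (fb x)) + c0 * (1 - ‖fb x‖) with hu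
  have hu0 : ∀ x i, 0 ≤ u x i := by
    intro x i
    have h1 := neg_ell_le_mu (fb x) i
    have h2 : 0 ≤ c0 * (1 - ‖fb x‖) := mul_nonneg hc00.le (by linarith [hfb1 x])
    simp only [hu]
    linarith
  have husum : ∀ x, (m + 2) * c0 ≤ ∑ i, u x i := by
    intro x
    simp only [hu, add_assoc]
    rw [sum_ell_add]
    have := norm_le_mu (fb x)
    gcongr
    linarith
  have huB : ∀ x i, u x i ≤ B := by
    intro x i
    have h1 := ell_mu_lip (fb x) 0 i
    have e0 : ∀ i, ell (0 : Eu m) i = 0 := fun i => by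
      have := ell_smul 0 (0 : Eu m) i
      simpa using this
    have e1 : mu (0 : Eu m) = 0 := by
      obtain ⟨i, hi⟩ := exists_mu (0 : Eu m)
      rw [hi, e0, neg_zero]
    rw [e0, e1, add_zero, sub_zero, sub_zero] at h1
    have h2 := le_of_abs_le h1
    have h3 := hfb1 x
    have h4 : 2 * ((m:ℝ) + 1) * ‖fb x‖ ≤ 2 * (m + 1) * 1 := by gcongr
    have h5 : c0 * (1 - ‖fb x‖) ≤ 1 * 1 := by
      apply mul_le_mul hc01 _ _ zero_le_one <;> linarith [norm_nonneg (fb x)]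
    simp only [hu, hB]
    linarith
  have huL : ∀ x y i, |u x i - u y i| ≤ K3 * lam * dist x y := by
    intro x y i
    have h1 := ell_mu_lip (fb x) (fb y) i
    have h2 : |c0 * (‖fb y‖ - ‖fb x‖)| ≤ c0 * ‖fb x - fb y‖ := by
      rw [abs_mul, abs_of_pos hc00, norm_sub_rev]
      gcongr
      exact abs_norm_sub_norm_le _ _
    have e : u x i - u y i = ((ell (fb x) i + mu (fb x)) - (ell (fb y) i + mu (fb y)))
      + c0 * (‖fb y‖ - ‖fb x‖) := by simp only [hu]; ring
    rw [e]
    calc _ ≤ _ := abs_add_le _ _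
      _ ≤ (2 * (m + 1) + c0) * ‖fb x - fb y‖ := by linarith
      _ ≤ (2 * (m + 1) + c0) * (K2 * lam * dist x y) := by
        gcongr; exact hfbL x y
      _ = _ := by rw [hK3]; ring
  set r : ℝ := c0 / (K3 * lam) with hr
  have hr0 : 0 < r := by positivity
  obtain ⟨V, hVU, hVm, hVL⟩ := H r (by
      rw [hr, lt_div_iff₀ (by positivity)]
      rw [lt_div_iff₀ (by positivity)] at hlamM
      linarith) (fun i => {x | 0 < u x i}) (by
      intro x
      obtain ⟨i, hi⟩ := exists_ge_avg (u x) c0 (husum x)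
      refine ⟨i, fun y hy => ?_⟩
      rw [Metric.mem_ball, dist_comm] at hy
      have h1 := le_of_abs_le (huL x y i)
      have h2 : K3 * lam * dist x y < c0 := by
        calc K3 * lam * dist x y < K3 * lam * r := by gcongr
          _ = c0 := by rw [hr]; field_simp
      change 0 < u y i
      linarith)
  choose! σ hσ using hVU
  set O : Fin (m + 2) → Set X := fun i => {x | ∃ W ∈ V, σ W = i ∧ x ∈ interior W} with hO
  have hOnot : ∀ x, ∃ i, x ∉ O i := by
    intro x
    by_contra hn
    push Not at hn
    choose W hWV hWσ hWx using hn
    have hinj : Function.Injective W := by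
      intro i j hij
      rw [← hWσ i, ← hWσ j, hij]
    have hsub : Set.range W ⊆ {W | W ∈ V ∧ x ∈ interior W} := by
      rintro _ ⟨i, rfl⟩
      exact ⟨hWV i, hWx i⟩
    have h1 := Set.ncard_le_ncard hsub (hVm x).1
    have h2 := (hVm x).2
    have h3 : (Set.range W).ncard = m + 2 := by
      rw [← Set.image_univ, Set.ncard_image_of_injective _ hinj]
      simp
    omega
  have hOu : ∀ x i, x ∈ O i → 0 < u x i := by
    rintro x i ⟨W, hW, rfl, hx⟩
    exact hσ W hW (interior_subset hx)
  have htr : 0 < t * r := by positivity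
  choose ψ hψ0 hψr hψL hψB hψO using fun i => depth (O i) (t * r) htr
  have hψone : ∀ x, ∃ i, ψ i x = t * r := by
    intro x
    obtain ⟨W, hW, hxW⟩ := hVL x
    refine ⟨σ W, hψB _ _ fun y hy => ⟨W, hW, rfl, ?_⟩⟩
    exact interior_maximal hxW Metric.isOpen_ball hy
  have hψz : ∀ x i, x ∉ O i → ψ i x = 0 := by
    intro x i hx
    by_contra h
    exact hx (hψO i x (lt_of_le_of_ne (hψ0 i x) (Ne.symm h)))
  set q : X → Fin (m + 2) → ℝ := fun x i => ψ i x / (t * r) with hq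
  have hq0 : ∀ x i, 0 ≤ q x i := fun x i => div_nonneg (hψ0 i x) htr.le
  have hq1 : ∀ x i, q x i ≤ 1 := fun x i => (div_le_one htr).2 (hψr i x)
  have hqsum : ∀ x, 1 ≤ ∑ i, q x i := by
    intro x
    obtain ⟨i, hi⟩ := hψone x
    have e : q x i = 1 := by
      simp only [hq, hi]; exact div_self htr.ne'
    rw [← e]
    exact Finset.single_le_sum (f := q x) (fun j _ => hq0 x j) (Finset.mem_univ i)
  have hqL : ∀ x y i, |q x i - q y i| ≤ K3 / (t * c0) * lam * dist x y := by
    intro x y i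
    simp only [hq]
    rw [← sub_div, abs_div, abs_of_pos htr, div_le_iff₀ htr]
    refine (hψL i x y).trans (le_of_eq ?_)
    rw [hr]; field_simp
  -- the cutoff
  set α : X → ℝ := fun x => min (2 * K1 * lam * Metric.infDist x A) 1 with hα
  have hα0 : ∀ x, 0 ≤ α x := fun x =>
    le_min (mul_nonneg (by positivity) Metric.infDist_nonneg) zero_le_one
  have hα1 : ∀ x, α x ≤ 1 := fun x => min_le_right _ _
  have hαL : ∀ x y, |α x - α y| ≤ 2 * K1 * lam * dist x y := by
    intro x y
    refine (abs_min_sub_min_le_max _ _ _ _).trans ?_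
    rw [sub_self, abs_zero, max_eq_left (abs_nonneg _), ← mul_sub, abs_mul,
      abs_of_pos (by positivity)]
    gcongr
    have := (Metric.lipschitz_infDist_pt A).dist_le_mul x y
    rw [Real.dist_eq] at this
    simpa using this
  have hαA : ∀ a : A, α a = 0 := by
    intro a
    simp [hα, Metric.infDist_zero_of_mem a.2]
  have hnear : ∀ x, α x < 1 → ‖fb x‖ = 1 := by
    intro x hx
    apply Nc_norm _ (by norm_num)
    have h1 : 2 * K1 * lam * Metric.infDist x A < 1 := by
      simpa [hα] using hx
    have h2 : Metric.infDist x A < 1 / (2 * K1 * lam) := by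
      rw [lt_div_iff₀ (by positivity)]; linarith
    obtain ⟨y, hy, hxy⟩ := (Metric.infDist_lt_iff hAn).1 h2
    have h3 := hf0L x y
    have h4 : K1 * lam * dist x y ≤ 1 / 2 := by
      rw [lt_div_iff₀ (by positivity)] at hxy
      linarith
    have h5 : ‖f0 y‖ = 1 := by rw [hf0A ⟨y, hy⟩]; exact hfn _
    have h6 := norm_sub_norm_le (f0 y) (f0 x)
    rw [norm_sub_rev] at h6
    linarith
  set h : X → Fin (m + 2) → ℝ := fun x i => (1 - α x) * u x i + α x * q x i with hh
  have hhz : ∀ x, ∃ i, h x i = 0 := by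
    intro x
    rcases lt_or_eq_of_le (hα1 x) with hx | hx
    · obtain ⟨i, hi⟩ := exists_mu (fb x)
      have hui : u x i = 0 := by
        simp only [hu, hi, hnear x hx]; ring
      have hqi : q x i = 0 := by
        simp only [hq]
        rw [hψz x i (fun hxO => by linarith [hOu x i hxO]), zero_div]
      exact ⟨i, by simp [hh, hui, hqi]⟩
    · obtain ⟨i, hi⟩ := hOnot x
      exact ⟨i, by simp [hh, hx, hq, hψz x i hi]⟩
  have hhsum : ∀ x, 1 / 2 ≤ ∑ i, h x i := by
    intro x
    simp only [hh]
    rw [Finset.sum_add_distrib, ← Finset.mul_sum, ← Finset.mul_sum]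
    have h1 : 1 / 2 ≤ ∑ i, u x i := by
      refine le_trans (le_of_eq ?_) (husum x)
      rw [hc0d]; field_simp
    have h2 := hqsum x
    nlinarith [hα0 x, hα1 x]
  have hhL : ∀ x y i, |h x i - h y i| ≤ D * lam * dist x y := by
    intro x y i
    have e : h x i - h y i = (1 - α y) * (u x i - u y i) + (α x - α y) * (q x i - u x i)
      + α y * (q x i - q y i) := by simp only [hh]; ring
    have d0 := dist_nonneg (x := x) (y := y)
    have h1 : |(1 - α y) * (u x i - u y i)| ≤ 1 * (K3 * lam * dist x y) := by
      rw [abs_mul]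
      apply mul_le_mul _ (huL x y i) (abs_nonneg _) zero_le_one
      rw [abs_le]; constructor <;> linarith [hα0 y, hα1 y]
    have h2 : |(α x - α y) * (q x i - u x i)| ≤ (2 * K1 * lam * dist x y) * (1 + B) := by
      rw [abs_mul]
      apply mul_le_mul (hαL x y) _ (abs_nonneg _) (by positivity)
      have hB0 : 0 ≤ B := by positivity
      rw [abs_le]; constructor <;> linarith [hq0 x i, hq1 x i, hu0 x i, huB x i]
    have h3 : |α y * (q x i - q y i)| ≤ 1 * (K3 / (t * c0) * lam * dist x y) := by
      rw [abs_mul]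
      apply mul_le_mul _ (hqL x y i) (abs_nonneg _) zero_le_one
      rw [abs_le]; constructor <;> linarith [hα0 y, hα1 y]
    have h4 := abs_add_le ((1 - α y) * (u x i - u y i) + (α x - α y) * (q x i - u x i))
      (α y * (q x i - q y i))
    have h5 := abs_add_le ((1 - α y) * (u x i - u y i)) ((α x - α y) * (q x i - u x i))
    have h6 : 0 ≤ K3 * lam * dist x y := by positivity
    rw [e, hD]
    linarith
  have hQ : ∀ x, c1 ≤ ‖Q (h x)‖ := by
    intro x
    obtain ⟨i, hi⟩ := hhz x
    refine le_trans ?_ (Q_lower (h x) i hi)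
    calc c1 = (1 / 2) / ((m + 2) * (m + 1)) := by rw [hc1]; field_simp
      _ ≤ _ := by
        gcongr
        exact hhsum x
  refine ⟨fun x => ⟨Nc c1 (Q (h x)), by
    rw [mem_sphere_zero_iff_norm]; exact Nc_norm c1 hc10 _ (hQ x)⟩, ?_, ?_⟩
  · intro a
    apply Subtype.ext
    change Nc c1 (Q (h a)) = f a
    have e : Q (h a) = f a := by
      have hha : h a = fun i => ell (f a : Eu m) i + mu (f a : Eu m) := by
        ext i
        simp [hh, hαA, hu, hfbA, hfn]
      ext j
      rw [← ell_castSucc, ← ell_castSucc, ell_Q, hha, sum_ell_add]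
      field_simp
      ring
    rw [e]
    exact Nc_eq _ hc11 _ (hfn a)
  · intro x y
    rw [Subtype.dist_eq, dist_eq_norm]
    refine (Nc_lip c1 hc10 _ _).trans ?_
    have := Q_lip (h x) (h y) _ (hhL x y)
    calc 2 / c1 * ‖Q (h x) - Q (h y)‖ ≤ 2 / c1 * (2 * (m + 1) * (D * lam * dist x y)) := by gcongr
      _ = _ := by ring

end SphereExt

theorem sphere_large_scale_extensor_iff_cover_refinement
    {X : Type*} [MetricSpace X] (m : ℕ) :
    LargeScaleLipschitzExtensorOf X (Metric.sphere (0 : EuclideanSpace ℝ (Fin (m + 1))) 1) ↔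
      ∃ t : ℝ, 0 < t ∧ ∃ M : ℝ, 0 < M ∧ ∀ r : ℝ, M < r →
        ∀ U : Fin (m + 2) → Set X, (∀ x : X, ∃ i, Metric.ball x r ⊆ U i) →
          ∃ V : Set (Set X),
            (∀ W ∈ V, ∃ i, W ⊆ U i) ∧
            MultiplicityLE V (m + 1) ∧
            (∀ x : X, ∃ W ∈ V, Metric.ball x (t * r) ⊆ W) := by
  exact ⟨SphereExt.forward_s9 m, SphereExt.backward_s9 m⟩
end

section
/- For a metric space X and integer m ≥ 0 the following are equivalent: (a) S^m is a small scale Lipschitz extensor of X; (b) there are constants t, M > 0 such that every cover U = {U_0,…,U_{m+1}} of X by m+2 subsets which is r-Lebesgue for some r with 0 < r < M admits a (t·r)-Lebesgue refinement V of multiplicity at most m+1. -/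
/-- maximal coordinate -/
noncomputable def mxc {n : ℕ} (y : Fin (n + 1) → ℝ) : ℝ := ⨆ i, y i

/-- minimal coordinate -/
noncomputable def mnc {n : ℕ} (y : Fin (n + 1) → ℝ) : ℝ := ⨅ i, y i

lemma le_mxc {n : ℕ} (y : Fin (n + 1) → ℝ) (i) : y i ≤ mxc y :=
  le_ciSup (Set.finite_range y).bddAbove i

lemma mnc_le {n : ℕ} (y : Fin (n + 1) → ℝ) (i) : mnc y ≤ y i :=
  ciInf_le (Set.finite_range y).bddBelow i

lemma exists_mxc {n : ℕ} (y : Fin (n + 1) → ℝ) : ∃ i, y i = mxc y :=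
  exists_eq_ciSup_of_finite

lemma exists_mnc {n : ℕ} (y : Fin (n + 1) → ℝ) : ∃ i, y i = mnc y :=
  exists_eq_ciInf_of_finite

lemma mxc_eq {n : ℕ} {y : Fin (n + 1) → ℝ} {a : ℝ} (h : ∀ i, y i ≤ a) (h' : ∃ i, y i = a) :
    mxc y = a := by
  obtain ⟨i, hi⟩ := h'
  obtain ⟨j, hj⟩ := exists_mxc y
  have := le_mxc y i
  have := h j
  linarith

lemma mnc_eq {n : ℕ} {y : Fin (n + 1) → ℝ} {a : ℝ} (h : ∀ i, a ≤ y i) (h' : ∃ i, y i = a) :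
    mnc y = a := by
  obtain ⟨i, hi⟩ := h'
  obtain ⟨j, hj⟩ := exists_mnc y
  have := mnc_le y i
  have := h j
  linarith

lemma mxc_lip {n : ℕ} {y z : Fin (n + 1) → ℝ} {d : ℝ} (h : ∀ i, |y i - z i| ≤ d) :
    |mxc y - mxc z| ≤ d := by
  obtain ⟨i, hi⟩ := exists_mxc y
  obtain ⟨j, hj⟩ := exists_mxc z
  have h1 := le_mxc y j
  have h2 := le_mxc z i
  have h3 := abs_le.1 (h i)
  have h4 := abs_le.1 (h j)
  rw [abs_le]; constructor <;> linarith [h3.1, h3.2, h4.1, h4.2]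

lemma mnc_lip {n : ℕ} {y z : Fin (n + 1) → ℝ} {d : ℝ} (h : ∀ i, |y i - z i| ≤ d) :
    |mnc y - mnc z| ≤ d := by
  obtain ⟨i, hi⟩ := exists_mnc y
  obtain ⟨j, hj⟩ := exists_mnc z
  have h1 := mnc_le y j
  have h2 := mnc_le z i
  have h3 := abs_le.1 (h i)
  have h4 := abs_le.1 (h j)
  rw [abs_le]; constructor <;> linarith [h3.1, h3.2, h4.1, h4.2]

/-- The model of the sphere. -/
def KSet (m : ℕ) : Set (Fin (m + 1 + 1) → ℝ) :=
  {y | (∀ i, 0 ≤ y i ∧ y i ≤ 1) ∧ (∃ i, y i = 0) ∧ ∃ i, y i = 1}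

lemma div_lip {V : Type*} [NormedAddCommGroup V] [NormedSpace ℝ V] {u v : V} {c e a b δ B : ℝ}
    (hδ : 0 < δ) (hc : δ ≤ c) (he : δ ≤ e) (hB : ‖v‖ ≤ B) (hu : ‖u - v‖ ≤ a)
    (hce : |c - e| ≤ b) :
    ‖c⁻¹ • u - e⁻¹ • v‖ ≤ a / δ + B * b / δ ^ 2 := by
  have hc0 : 0 < c := by linarith
  have he0 : 0 < e := by linarith
  have e1 : c⁻¹ • u - e⁻¹ • v = c⁻¹ • (u - v) + (c⁻¹ - e⁻¹) • v := by
    rw [smul_sub, sub_smul]; abel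
  have e2 : c⁻¹ - e⁻¹ = (e - c) / (c * e) := by field_simp
  have hB0 : 0 ≤ B := (norm_nonneg _).trans hB
  have hb0 : 0 ≤ b := (abs_nonneg _).trans hce
  have ha0 : 0 ≤ a := (norm_nonneg _).trans hu
  rw [e1]
  refine (norm_add_le _ _).trans (add_le_add ?_ ?_)
  · rw [norm_smul, Real.norm_eq_abs, abs_of_pos (inv_pos.2 hc0), ← div_eq_inv_mul]
    exact div_le_div₀ ha0 hu hδ hc
  · rw [norm_smul, e2, Real.norm_eq_abs, abs_div, abs_of_pos (mul_pos hc0 he0), abs_sub_comm,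
      div_mul_eq_mul_div, mul_comm]
    refine div_le_div₀ (by positivity) (mul_le_mul hB hce (abs_nonneg _) hB0) (by positivity) ?_
    rw [sq]; exact mul_le_mul hc he hδ.le hc0.le

lemma ext_transfer {X E E' : Type*} [MetricSpace X] [MetricSpace E] [MetricSpace E']
    (p : E → E') (q : E' → E) (hpq : ∀ z, p (q z) = z)
    (hp : ∃ L : ℝ, 0 < L ∧ ∀ x y, dist (p x) (p y) ≤ L * dist x y)
    (hq : ∃ L : ℝ, 0 < L ∧ ∀ x y, dist (q x) (q y) ≤ L * dist x y)
    (h : SmallScaleLipschitzExtensorOf X E) : SmallScaleLipschitzExtensorOf X E' := by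
  obtain ⟨C, hC, M, hM, h⟩ := h
  obtain ⟨L, hL, hp⟩ := hp
  obtain ⟨L', hL', hq⟩ := hq
  refine ⟨L * (C * L'), by positivity, M / L', by positivity, ?_⟩
  intro A hA lam hlam f hf
  have h1 : M < L' * lam := by rwa [div_lt_iff₀' hL'] at hlam
  obtain ⟨g, hg1, hg2⟩ := h A hA (L' * lam) h1 (fun a => q (f a)) (by
    intro a b
    refine (hq _ _).trans ?_
    rw [mul_assoc]
    exact mul_le_mul_of_nonneg_left (hf a b) hL'.le)
  refine ⟨fun x => p (g x), fun a => by simp only [hg1, hpq], fun x y => ?_⟩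
  refine (hp _ _).trans ?_
  calc L * dist (g x) (g y) ≤ L * (C * (L' * lam) * dist x y) :=
        mul_le_mul_of_nonneg_left (hg2 x y) hL.le
    _ = _ := by ring

/-- differences with the first coordinate -/
noncomputable def Lmap (m : ℕ) : (Fin (m + 1 + 1) → ℝ) →L[ℝ] EuclideanSpace ℝ (Fin (m + 1)) :=
  LinearMap.toContinuousLinearMap
    { toFun := fun y => WithLp.toLp 2 (fun i => y i.succ - y 0)
      map_add' := by intro x y; ext i; simp; ring
      map_smul' := by intro c y; ext i; simp; ring }

/-- insertion of a zero coordinate -/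
noncomputable def Jmap (m : ℕ) : EuclideanSpace ℝ (Fin (m + 1)) →L[ℝ] (Fin (m + 1 + 1) → ℝ) :=
  LinearMap.toContinuousLinearMap
    { toFun := fun v => Fin.cons 0 (fun i => v i)
      map_add' := by intro x y; ext i; refine Fin.cases ?_ (fun j => ?_) i <;> simp
      map_smul' := by intro c y; ext i; refine Fin.cases ?_ (fun j => ?_) i <;> simp }

lemma Lmap_apply {m : ℕ} (y i) : Lmap m y i = y i.succ - y 0 := rfl
lemma Jmap_zero {m : ℕ} (v) : Jmap m v 0 = 0 := rfl
lemma Jmap_succ {m : ℕ} (v) (i : Fin (m + 1)) : Jmap m v i.succ = v i := rfl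

lemma Lmap_Jmap {m : ℕ} (v) : Lmap m (Jmap m v) = v := by
  ext i; simp [Lmap_apply, Jmap_zero, Jmap_succ]

lemma Jmap_Lmap {m : ℕ} (y) (i) : Jmap m (Lmap m y) i = y i - y 0 := by
  refine Fin.cases ?_ (fun j => ?_) i
  · simp [Jmap_zero]
  · simp [Jmap_succ, Lmap_apply]

lemma norm_Jmap_le {m : ℕ} (v) : ‖Jmap m v‖ ≤ mxc (Jmap m v) - mnc (Jmap m v) := by
  have h0 := Jmap_zero v
  have h1 := le_mxc (Jmap m v) 0
  have h2 := mnc_le (Jmap m v) 0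
  rw [pi_norm_le_iff_of_nonneg (by linarith)]
  intro i
  have h3 := le_mxc (Jmap m v) i
  have h4 := mnc_le (Jmap m v) i
  rw [Real.norm_eq_abs, abs_le]; constructor <;> linarith

lemma osc_lower (m : ℕ) : ∃ δ : ℝ, 0 < δ ∧ ∀ v : EuclideanSpace ℝ (Fin (m + 1)), ‖v‖ = 1 →
    δ ≤ mxc (Jmap m v) - mnc (Jmap m v) := by
  refine ⟨1 / (‖Lmap m‖ + 1), by positivity, fun v hv => ?_⟩
  refine le_trans ?_ (norm_Jmap_le v)
  rw [div_le_iff₀ (by positivity)]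
  have := (Lmap m).le_opNorm (Jmap m v)
  rw [Lmap_Jmap, hv] at this
  nlinarith [norm_nonneg (Jmap m v)]

lemma L_lower (m : ℕ) : ∃ δ : ℝ, 0 < δ ∧ ∀ y ∈ KSet m, δ ≤ ‖Lmap m y‖ := by
  refine ⟨1 / (2 * (‖Jmap m‖ + 1)), by positivity, ?_⟩
  rintro y ⟨-, ⟨i, hi⟩, j, hj⟩
  rw [div_le_iff₀ (by positivity)]
  have h := (Jmap m).le_opNorm (Lmap m y)
  have h1 := norm_le_pi_norm (Jmap m (Lmap m y)) i
  have h2 := norm_le_pi_norm (Jmap m (Lmap m y)) j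
  rw [Jmap_Lmap, Real.norm_eq_abs] at h1 h2
  have h3 := abs_le.1 h1
  have h4 := abs_le.1 h2
  nlinarith [norm_nonneg (Lmap m y)]

/-- from the model to the sphere -/
noncomputable def pmap (m : ℕ) (y : KSet m) :
    Metric.sphere (0 : EuclideanSpace ℝ (Fin (m + 1))) 1 :=
  ⟨‖Lmap m y‖⁻¹ • Lmap m y, by
    obtain ⟨δ, hδ, h⟩ := L_lower m
    have := h y y.2
    have h0 : ‖Lmap m y‖ ≠ 0 := by linarith
    rw [mem_sphere_zero_iff_norm, norm_smul, norm_inv, norm_norm, inv_mul_cancel₀ h0]⟩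

/-- from the sphere to the model -/
noncomputable def qmap (m : ℕ) (v : Metric.sphere (0 : EuclideanSpace ℝ (Fin (m + 1))) 1) :
    KSet m :=
  ⟨(mxc (Jmap m v) - mnc (Jmap m v))⁻¹ • (Jmap m v - fun _ => mnc (Jmap m v)), by
    obtain ⟨δ, hδ, h⟩ := osc_lower m
    have h0 := h v (mem_sphere_zero_iff_norm.1 v.2)
    have hpos : 0 < mxc (Jmap m v) - mnc (Jmap m v) := by linarith
    refine ⟨fun i => ?_, ?_, ?_⟩
    · have h1 := le_mxc (Jmap m v) i
      have h2 := mnc_le (Jmap m v) i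
      simp only [Pi.smul_apply, Pi.sub_apply, smul_eq_mul]
      rw [← div_eq_inv_mul]
      exact ⟨div_nonneg (by linarith) hpos.le, (div_le_one hpos).2 (by linarith)⟩
    · obtain ⟨i, hi⟩ := exists_mnc (Jmap m v)
      exact ⟨i, by simp [hi]⟩
    · obtain ⟨i, hi⟩ := exists_mxc (Jmap m v)
      exact ⟨i, by simp [hi, hpos.ne']⟩⟩

lemma Lmap_const {m : ℕ} (c : ℝ) : Lmap m (fun _ => c) = 0 := by
  ext i; simp [Lmap_apply]

lemma pq {m : ℕ} (v) : pmap m (qmap m v) = v := by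
  obtain ⟨δ, hδ, h⟩ := osc_lower m
  have hv := mem_sphere_zero_iff_norm.1 v.2
  have h0 := h v hv
  have hpos : 0 < mxc (Jmap m v) - mnc (Jmap m v) := by linarith
  apply Subtype.ext
  simp only [pmap, qmap, map_smul, map_sub, Lmap_const, Lmap_Jmap, sub_zero, norm_smul, hv,
    norm_inv, Real.norm_eq_abs, abs_of_pos hpos, mul_one, inv_inv, smul_smul]
  rw [mul_inv_cancel₀ hpos.ne', one_smul]

lemma qp {m : ℕ} (y) : qmap m (pmap m y) = y := by
  obtain ⟨δ, hδ, h⟩ := L_lower m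
  have h0 := h y y.2
  have hpos : 0 < ‖Lmap m y‖⁻¹ := inv_pos.2 (by linarith)
  obtain ⟨hb, ⟨i, hi⟩, j, hj⟩ := y.2
  have e : Jmap m (pmap m y : EuclideanSpace ℝ (Fin (m + 1))) =
      fun k => ‖Lmap m y‖⁻¹ * (y.1 k - y.1 0) := by
    ext k
    simp only [pmap, map_smul, Pi.smul_apply, Jmap_Lmap, smul_eq_mul]
  have emn : mnc (Jmap m (pmap m y : EuclideanSpace ℝ (Fin (m + 1)))) =
      ‖Lmap m y‖⁻¹ * (0 - y.1 0) := by
    rw [e]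
    exact mnc_eq (fun k => mul_le_mul_of_nonneg_left (by linarith [(hb k).1]) hpos.le)
      ⟨i, by rw [hi]⟩
  have emx : mxc (Jmap m (pmap m y : EuclideanSpace ℝ (Fin (m + 1)))) =
      ‖Lmap m y‖⁻¹ * (1 - y.1 0) := by
    rw [e]
    exact mxc_eq (fun k => mul_le_mul_of_nonneg_left (by linarith [(hb k).2]) hpos.le)
      ⟨j, by rw [hj]⟩
  apply Subtype.ext
  ext k
  simp only [qmap, emn, emx]
  rw [e]
  simp only [Pi.smul_apply, Pi.sub_apply, smul_eq_mul]
  have h5 : ‖Lmap m y‖⁻¹ * (1 - y.1 0) - ‖Lmap m y‖⁻¹ * (0 - y.1 0) = ‖Lmap m y‖⁻¹ := by ring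
  have h6 : ‖Lmap m y‖⁻¹ * (y.1 k - y.1 0) - ‖Lmap m y‖⁻¹ * (0 - y.1 0) =
    ‖Lmap m y‖⁻¹ * y.1 k := by ring
  rw [h5, h6, ← mul_assoc, inv_mul_cancel₀ hpos.ne', one_mul]

lemma KSet_norm {m : ℕ} {y} (hy : y ∈ KSet m) : ‖y‖ ≤ 1 := by
  rw [pi_norm_le_iff_of_nonneg zero_le_one]
  intro i
  rw [Real.norm_eq_abs, abs_of_nonneg (hy.1 i).1]
  exact (hy.1 i).2

lemma p_lip (m : ℕ) : ∃ L : ℝ, 0 < L ∧ ∀ x y, dist (pmap m x) (pmap m y) ≤ L * dist x y := by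
  obtain ⟨δ, hδ, h⟩ := L_lower m
  refine ⟨(‖Lmap m‖ + 1) / δ + (‖Lmap m‖ + 1) * (‖Lmap m‖ + 1) / δ ^ 2, by positivity, ?_⟩
  intro x y
  rw [Subtype.dist_eq, dist_eq_norm]
  have h1 : ‖Lmap m x - Lmap m y‖ ≤ (‖Lmap m‖ + 1) * dist x y := by
    rw [← map_sub, Subtype.dist_eq, dist_eq_norm]
    refine ((Lmap m).le_opNorm _).trans ?_
    gcongr; linarith
  have h2 : ‖Lmap m y‖ ≤ ‖Lmap m‖ + 1 := by
    refine ((Lmap m).le_opNorm _).trans ?_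
    have := KSet_norm y.2
    nlinarith [norm_nonneg (Lmap m)]
  refine (div_lip hδ (h x x.2) (h y y.2) h2 h1
    ((abs_norm_sub_norm_le _ _).trans h1)).trans (le_of_eq ?_)
  ring

lemma q_lip (m : ℕ) : ∃ L : ℝ, 0 < L ∧ ∀ x y, dist (qmap m x) (qmap m y) ≤ L * dist x y := by
  obtain ⟨δ, hδ, h⟩ := osc_lower m
  refine ⟨(2 * (‖Jmap m‖ + 1)) / δ + (2 * (‖Jmap m‖ + 1)) * (2 * (‖Jmap m‖ + 1)) / δ ^ 2,
    by positivity, ?_⟩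
  intro x y
  rw [Subtype.dist_eq, dist_eq_norm]
  have h1 : ‖Jmap m x - Jmap m y‖ ≤ (‖Jmap m‖ + 1) * dist x y := by
    rw [← map_sub, Subtype.dist_eq, dist_eq_norm]
    refine ((Jmap m).le_opNorm _).trans ?_
    gcongr; linarith
  have h1' : ∀ i, |Jmap m x i - Jmap m y i| ≤ (‖Jmap m‖ + 1) * dist x y := fun i =>
    (norm_le_pi_norm (Jmap m x - Jmap m y) i).trans h1
  have hmn := mnc_lip h1'
  have hmx := mxc_lip h1'
  have h2 : ‖Jmap m y‖ ≤ ‖Jmap m‖ + 1 := by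
    refine ((Jmap m).le_opNorm _).trans ?_
    rw [mem_sphere_zero_iff_norm.1 y.2]; linarith
  have hD : 0 ≤ (‖Jmap m‖ + 1) * dist x y := by positivity
  have hJ : 0 ≤ ‖Jmap m‖ := norm_nonneg _
  have h3 : ‖(Jmap m y - fun _ => mnc (Jmap m y))‖ ≤ 2 * (‖Jmap m‖ + 1) := by
    rw [pi_norm_le_iff_of_nonneg (by linarith)]
    intro i
    obtain ⟨j, hj⟩ := exists_mnc (Jmap m y)
    have a1 := abs_le.1 ((norm_le_pi_norm (Jmap m y) i).trans h2)
    have a2 := abs_le.1 ((norm_le_pi_norm (Jmap m y) j).trans h2)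
    rw [Pi.sub_apply, Real.norm_eq_abs, abs_le]
    constructor <;> linarith [a1.1, a1.2, a2.1, a2.2]
  have h4 : ‖(Jmap m x - fun _ => mnc (Jmap m x)) - (Jmap m y - fun _ => mnc (Jmap m y))‖ ≤
      2 * ((‖Jmap m‖ + 1) * dist x y) := by
    rw [pi_norm_le_iff_of_nonneg (by linarith)]
    intro i
    have a1 := abs_le.1 (h1' i)
    have a2 := abs_le.1 hmn
    simp only [Pi.sub_apply]
    rw [Real.norm_eq_abs, abs_le]
    constructor <;> linarith [a1.1, a1.2, a2.1, a2.2]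
  have h5 : |(mxc (Jmap m x) - mnc (Jmap m x)) - (mxc (Jmap m y) - mnc (Jmap m y))| ≤
      2 * ((‖Jmap m‖ + 1) * dist x y) := by
    have a1 := abs_le.1 hmx
    have a2 := abs_le.1 hmn
    rw [abs_le]
    constructor <;> linarith [a1.1, a1.2, a2.1, a2.2]
  refine (div_lip hδ (h x (mem_sphere_zero_iff_norm.1 x.2))
    (h y (mem_sphere_zero_iff_norm.1 y.2)) h3 h4 h5).trans (le_of_eq ?_)
  ring

lemma sphere_iff_K {X : Type*} [MetricSpace X] (m : ℕ) :
    SmallScaleLipschitzExtensorOf X (Metric.sphere (0 : EuclideanSpace ℝ (Fin (m + 1))) 1) ↔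
    SmallScaleLipschitzExtensorOf X (KSet m) :=
  ⟨ext_transfer _ _ qp (q_lip m) (p_lip m), ext_transfer _ _ pq (p_lip m) (q_lip m)⟩

/-- bump function of a set -/
lemma exists_bump {X : Type*} [MetricSpace X] (V : Set X) {r : ℝ} (hr : 0 < r) :
    ∃ φ : X → ℝ, (∀ x, 0 ≤ φ x ∧ φ x ≤ 1) ∧ (∀ x, x ∉ V → φ x = 0) ∧
      (∀ x, Metric.ball x r ⊆ V → φ x = 1) ∧ ∀ x y, |φ x - φ y| ≤ 1 / r * dist x y := by
  by_cases hV : (Vᶜ).Nonempty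
  · refine ⟨fun x => min 1 (Metric.infDist x Vᶜ / r), fun x => ⟨?_, min_le_left _ _⟩, ?_, ?_, ?_⟩
    · exact le_min zero_le_one (div_nonneg Metric.infDist_nonneg hr.le)
    · intro x hx
      simp [Metric.infDist_zero_of_mem (show x ∈ Vᶜ from hx)]
    · intro x hx
      refine min_eq_left ?_
      rw [le_div_iff₀ hr, one_mul, Metric.le_infDist hV]
      intro y hy
      by_contra hlt
      exact hy (hx (by rw [Metric.mem_ball, dist_comm]; linarith))
    · intro x y
      have h1 := abs_min_sub_min_le_max 1 (Metric.infDist x Vᶜ / r) 1 (Metric.infDist y Vᶜ / r)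
      refine h1.trans (max_le ?_ ?_)
      · simp; positivity
      · rw [← sub_div, abs_div, abs_of_pos hr, div_mul_eq_mul_div, one_mul]
        gcongr
        rw [abs_le]
        constructor
        · linarith [Metric.infDist_le_infDist_add_dist (s := Vᶜ) (x := y) (y := x), dist_comm x y]
        · linarith [Metric.infDist_le_infDist_add_dist (s := Vᶜ) (x := x) (y := y)]
  · rw [Set.not_nonempty_iff_eq_empty, Set.compl_empty_iff] at hV
    subst hV
    refine ⟨fun _ => 1, by simp, by simp, by simp, fun x y => ?_⟩
    simp; positivity

lemma forward {X : Type*} [MetricSpace X] (m : ℕ)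
    (h : SmallScaleLipschitzExtensorOf X (KSet m)) :
      ∃ t : ℝ, 0 < t ∧ ∃ M : ℝ, 0 < M ∧ ∀ r : ℝ, 0 < r → r < M →
        ∀ U : Fin (m + 2) → Set X, (∀ x : X, ∃ i, Metric.ball x r ⊆ U i) →
          ∃ V : Set (Set X),
            (∀ W ∈ V, ∃ i, W ⊆ U i) ∧
            MultiplicityLE V (m + 1) ∧
            (∀ x : X, ∃ W ∈ V, Metric.ball x (t * r) ⊆ W) := by
  obtain ⟨C, hC, M, hM, h⟩ := h
  refine ⟨1 / C, by positivity, 1 / M, by positivity, ?_⟩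
  intro r hr hrM U hU
  choose φ hφ1 hφ2 hφ3 hφ4 using fun i => exists_bump (U i) hr
  by_cases hA : {x | ∃ i, φ i x = 0}.Nonempty
  swap
  · refine ⟨{Set.univ}, ?_, ?_, ?_⟩
    · intro W _
      refine ⟨0, fun x _ => ?_⟩
      by_contra hx
      exact hA ⟨x, 0, hφ2 0 x hx⟩
    · intro x
      have hs : {W : Set X | W ∈ ({Set.univ} : Set (Set X)) ∧ x ∈ interior W} ⊆ {Set.univ} :=
        fun W hW => hW.1
      refine ⟨(Set.finite_singleton _).subset hs, ?_⟩
      have := Set.ncard_le_ncard hs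
      rw [Set.ncard_singleton] at this
      omega
    · exact fun x => ⟨Set.univ, rfl, Set.subset_univ _⟩
  have hM' : M < 1 / r := by
    rw [lt_div_iff₀ hr]; rw [lt_div_iff₀ hM] at hrM; linarith
  obtain ⟨g, hg1, hg2⟩ := h _ hA (1 / r) hM'
    (fun a => ⟨fun i => φ i a, fun i => hφ1 i a, a.2, by
      obtain ⟨i, hi⟩ := hU a
      exact ⟨i, hφ3 i _ hi⟩⟩) (by
    intro a b
    rw [Subtype.dist_eq, dist_pi_le_iff (by positivity)]
    intro i
    exact hφ4 i a b)
  refine ⟨Set.range fun i => {x | 0 < (g x).1 i}, ?_, ?_, ?_⟩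
  · rintro _ ⟨i, rfl⟩
    refine ⟨i, fun x hx => ?_⟩
    by_contra hxU
    have h0 := hφ2 i x hxU
    have := hg1 ⟨x, i, h0⟩
    simp only [Set.mem_ofPred_eq] at hx this
    rw [this] at hx
    simp only [h0] at hx
    exact lt_irrefl _ hx
  · intro x
    obtain ⟨i, hi⟩ := (g x).2.2.1
    have hs : {W : Set X | W ∈ (Set.range fun i => {x | 0 < (g x).1 i}) ∧ x ∈ interior W} ⊆
        ((Finset.univ.erase i).image fun i => {x | 0 < (g x).1 i} : Finset (Set X)) := by
      rintro _ ⟨⟨j, rfl⟩, hx⟩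
      have hx' := interior_subset hx
      simp only [Finset.coe_image, Set.mem_image, Finset.coe_erase]
      refine ⟨j, ⟨by simp, ?_⟩, rfl⟩
      rintro rfl
      simp only [Set.mem_ofPred_eq] at hx'
      linarith
    refine ⟨(Finset.finite_toSet _).subset hs, ?_⟩
    have h1 := Set.ncard_le_ncard hs (Finset.finite_toSet _)
    rw [Set.ncard_coe_finset] at h1
    refine h1.trans (Finset.card_image_le.trans ?_)
    rw [Finset.card_erase_of_mem (Finset.mem_univ _)]
    simp
  · intro x
    obtain ⟨i, hi⟩ := (g x).2.2.2
    refine ⟨_, ⟨i, rfl⟩, fun y hy => ?_⟩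
    have h1 := hg2 y x
    rw [Subtype.dist_eq] at h1
    have h2 := (dist_le_pi_dist (g y).1 (g x).1 i).trans h1
    rw [Real.dist_eq, hi] at h2
    have h3 := (abs_le.1 h2).1
    rw [Metric.mem_ball] at hy
    have h4 : C * (1 / r) * dist y x < 1 := by
      calc C * (1 / r) * dist y x < C * (1 / r) * (1 / C * r) :=
            mul_lt_mul_of_pos_left hy (by positivity)
        _ = 1 := by field_simp
    simp only [Set.mem_ofPred_eq]
    linarith

lemma regroup {X : Type*} [MetricSpace X] {m : ℕ} {U : Fin (m + 2) → Set X} {V : Set (Set X)}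
    {s : ℝ} (hV : ∀ W ∈ V, ∃ i, W ⊆ U i) (hm : MultiplicityLE V (m + 1))
    (hL : ∀ x : X, ∃ W ∈ V, Metric.ball x s ⊆ W) :
    ∃ V' : Fin (m + 2) → Set X, (∀ i, V' i ⊆ U i) ∧ (∀ x, ∃ i, x ∉ V' i) ∧
      ∀ x, ∃ i, Metric.ball x s ⊆ V' i := by
  choose! c hc using hV
  refine ⟨fun i => ⋃ W ∈ {W | W ∈ V ∧ c W = i}, interior W, ?_, ?_, ?_⟩
  · intro i x hx
    simp only [Set.mem_ofPred_eq, Set.mem_iUnion] at hx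
    obtain ⟨W, ⟨hW, rfl⟩, hx⟩ := hx
    exact hc W hW (interior_subset hx)
  · intro x
    by_contra hcon
    push Not at hcon
    simp only [Set.mem_ofPred_eq, Set.mem_iUnion] at hcon
    choose W hW hx using hcon
    have hinj : Function.Injective W := fun i j hij => by
      rw [← (hW i).2, ← (hW j).2, hij]
    have hsub : Set.range W ⊆ {W | W ∈ V ∧ x ∈ interior W} := by
      rintro _ ⟨i, rfl⟩
      exact ⟨(hW i).1, hx i⟩
    have h1 := Set.ncard_le_ncard hsub (hm x).1
    have h2 := (hm x).2
    rw [← Set.image_univ, Set.ncard_image_of_injective _ hinj, Set.ncard_univ,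
      Nat.card_eq_fintype_card, Fintype.card_fin] at h1
    omega
  · intro x
    obtain ⟨W, hW, hx⟩ := hL x
    refine ⟨c W, fun y hy => ?_⟩
    simp only [Set.mem_ofPred_eq, Set.mem_iUnion]
    exact ⟨W, ⟨hW, rfl⟩, interior_maximal hx Metric.isOpen_ball hy⟩

lemma mul_lip {a a' b b' α β : ℝ} (ha : |a - a'| ≤ α) (hb : |b - b'| ≤ β)
    (h1 : 0 ≤ a ∧ a ≤ 1) (h2 : 0 ≤ b' ∧ b' ≤ 1) : |a * b - a' * b'| ≤ α + β := by
  have e : a * b - a' * b' = a * (b - b') + (a - a') * b' := by ring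
  rw [e]
  refine (abs_add_le _ _).trans ?_
  rw [abs_mul, abs_mul, abs_of_nonneg h1.1, abs_of_nonneg h2.1]
  nlinarith [abs_nonneg (a - a'), abs_nonneg (b - b')]

lemma backward {X : Type*} [MetricSpace X] (m : ℕ)
    (h : ∃ t : ℝ, 0 < t ∧ ∃ M : ℝ, 0 < M ∧ ∀ r : ℝ, 0 < r → r < M →
        ∀ U : Fin (m + 2) → Set X, (∀ x : X, ∃ i, Metric.ball x r ⊆ U i) →
          ∃ V : Set (Set X),
            (∀ W ∈ V, ∃ i, W ⊆ U i) ∧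
            MultiplicityLE V (m + 1) ∧
            (∀ x : X, ∃ W ∈ V, Metric.ball x (t * r) ⊆ W)) :
    SmallScaleLipschitzExtensorOf X (KSet m) := by
  obtain ⟨t, ht, M, hM, h⟩ := h
  refine ⟨36 * (8 + 8 / t), by positivity, 1 / (8 * M), by positivity, ?_⟩
  intro A hA lam hlam f hf
  have hlam0 : 0 < lam := lt_trans (by positivity) hlam
  have hr : 0 < 1 / (8 * lam) := by positivity
  have hrM : 1 / (8 * lam) < M := by
    rw [div_lt_iff₀ (by positivity)] at hlam ⊢
    linarith
  -- coordinatewise extension with values in the cube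
  obtain ⟨F, hF01, hFA, hFl⟩ : ∃ F : X → Fin (m + 1 + 1) → ℝ, (∀ x i, 0 ≤ F x i ∧ F x i ≤ 1) ∧
      (∀ a : A, F a = (f a).1) ∧ ∀ x y i, |F x i - F y i| ≤ lam * dist x y := by
    classical
    let f' : X → Fin (m + 1 + 1) → ℝ := fun x => if hx : x ∈ A then (f ⟨x, hx⟩).1 else 0
    have hf' : LipschitzOnWith ⟨lam, hlam0.le⟩ f' A := by
      apply LipschitzOnWith.of_dist_le_mul
      intro x hx y hy
      simp only [f', hx, hy, dif_pos]
      exact hf ⟨x, hx⟩ ⟨y, hy⟩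
    obtain ⟨g, hg, hgA⟩ := hf'.extend_pi
    refine ⟨fun x i => max 0 (min 1 (g x i)), fun x i => ⟨le_max_left _ _, ?_⟩, ?_, ?_⟩
    · exact max_le zero_le_one (min_le_left _ _)
    · intro a
      have : g a = (f a).1 := by
        rw [← hgA a.2]; simp [f']
      ext i
      have hb := (f a).2.1 i
      beta_reduce
      rw [this, min_eq_right hb.2, max_eq_right hb.1]
    · intro x y i
      have h1 := (dist_le_pi_dist (g x) (g y) i).trans (hg.dist_le_mul x y)
      rw [Real.dist_eq] at h1
      have h2 := abs_max_sub_max_le_max 0 (min 1 (g x i)) 0 (min 1 (g y i))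
      have h3 := abs_min_sub_min_le_max 1 (g x i) 1 (g y i)
      simp only [sub_self, abs_zero, abs_nonneg, max_eq_right] at h2 h3
      exact h2.trans (h3.trans h1)
  have hmn : ∀ x y, |mnc (F x) - mnc (F y)| ≤ lam * dist x y := fun x y => mnc_lip (hFl x y)
  have hmx : ∀ x y, |mxc (F x) - mxc (F y)| ≤ lam * dist x y := fun x y => mxc_lip (hFl x y)
  set o : X → ℝ := fun x => mxc (F x) - mnc (F x) with ho
  have hol : ∀ x y, |o x - o y| ≤ 2 * (lam * dist x y) := by
    intro x y
    have a1 := abs_le.1 (hmx x y)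
    have a2 := abs_le.1 (hmn x y)
    rw [abs_le]
    constructor <;> simp only [ho] <;> linarith [a1.1, a1.2, a2.1, a2.2]
  have hFl' : ∀ x y i, |(F x i - mnc (F x)) - (F y i - mnc (F y))| ≤ 2 * (lam * dist x y) := by
    intro x y i
    have a1 := abs_le.1 (hFl x y i)
    have a2 := abs_le.1 (hmn x y)
    rw [abs_le]
    constructor <;> linarith [a1.1, a1.2, a2.1, a2.2]
  have hF' : ∀ x i, 0 ≤ F x i - mnc (F x) ∧ F x i - mnc (F x) ≤ 1 := by
    intro x i
    obtain ⟨j, hj⟩ := exists_mnc (F x)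
    have h1 := hF01 x i
    have h2 := hF01 x j
    have h3 := mnc_le (F x) i
    constructor <;> linarith [h1.2, h2.1]
  have ho01 : ∀ x, 0 ≤ o x ∧ o x ≤ 1 := by
    intro x
    obtain ⟨j, hj⟩ := exists_mxc (F x)
    have := hF' x j
    rw [hj] at this
    exact this
  -- the cover
  obtain ⟨V, hV1, hV2, hV3⟩ := h _ hr hrM
    (fun i => {x | o x < 1 / 2 ∨ 0 < F x i - mnc (F x)}) (by
    intro x
    have key : ∀ y ∈ Metric.ball x (1 / (8 * lam)), 2 * (lam * dist y x) < 1 / 4 := by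
      intro y hy
      rw [Metric.mem_ball, lt_div_iff₀ (by positivity)] at hy
      linarith
    by_cases hx : o x < 1 / 4
    · refine ⟨0, fun y hy => Or.inl ?_⟩
      have := (abs_le.1 (hol y x)).2
      linarith [key y hy]
    · obtain ⟨i, hi⟩ := exists_mxc (F x)
      refine ⟨i, fun y hy => Or.inr ?_⟩
      have := (abs_le.1 (hFl' y x i)).1
      have h2 : F x i - mnc (F x) = o x := by rw [hi]
      linarith [key y hy])
  obtain ⟨V', hVU, hVe, hVL⟩ := regroup hV1 hV2 hV3
  have hs : 0 < t * (1 / (8 * lam)) := by positivity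
  choose φ hφ1 hφ2 hφ3 hφ4 using fun i => exists_bump (V' i) hs
  have hφ4' : ∀ i x y, |φ i x - φ i y| ≤ 8 / t * (lam * dist x y) := by
    intro i x y
    refine (hφ4 i x y).trans (le_of_eq ?_)
    field_simp
  set a : X → ℝ := fun x => max 0 (2 * o x - 1) with ha
  have ha01 : ∀ x, 0 ≤ a x ∧ a x ≤ 1 := fun x =>
    ⟨le_max_left _ _, max_le zero_le_one (by linarith [(ho01 x).2])⟩
  have hal : ∀ x y, |a x - a y| ≤ 4 * (lam * dist x y) := by
    intro x y
    have h2 := abs_max_sub_max_le_max 0 (2 * o x - 1) 0 (2 * o y - 1)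
    simp only [sub_self, abs_zero, abs_nonneg, max_eq_right] at h2
    refine h2.trans ?_
    have := abs_le.1 (hol x y)
    rw [abs_le]; constructor <;> linarith [this.1, this.2]
  have hb01 : ∀ x, 0 ≤ 1 - o x ∧ 1 - o x ≤ 1 := fun x =>
    ⟨by linarith [(ho01 x).2], by linarith [(ho01 x).1]⟩
  have hbl : ∀ x y, |(1 - o x) - (1 - o y)| ≤ 2 * (lam * dist x y) := by
    intro x y
    have := abs_le.1 (hol x y)
    rw [abs_le]; constructor <;> linarith [this.1, this.2]
  set G : X → Fin (m + 1 + 1) → ℝ :=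
    fun x i => a x * (F x i - mnc (F x)) + (1 - o x) * φ i x with hG
  have hGl : ∀ x y i, |G x i - G y i| ≤ (8 + 8 / t) * (lam * dist x y) := by
    intro x y i
    have h1 := abs_le.1 (mul_lip (hal x y) (hFl' x y i) (ha01 x) (hF' y i))
    have h2 := abs_le.1 (mul_lip (hbl x y) (hφ4' i x y) (hb01 x) (hφ1 i y))
    rw [abs_le]
    simp only [hG]
    constructor <;> linarith [h1.1, h1.2, h2.1, h2.2]
  have hG0 : ∀ x i, 0 ≤ G x i := fun x i =>
    add_nonneg (mul_nonneg (ha01 x).1 (hF' x i).1) (mul_nonneg (hb01 x).1 (hφ1 i x).1)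
  have hG2 : ∀ x i, G x i ≤ 2 := by
    intro x i
    have h1 := mul_le_one₀ (ha01 x).2 (hF' x i).1 (hF' x i).2
    have h2 := mul_le_one₀ (hb01 x).2 (hφ1 i x).1 (hφ1 i x).2
    simp only [hG]; linarith
  have hGz : ∀ x, ∃ i, G x i = 0 := by
    intro x
    by_cases hx : o x < 1 / 2
    · obtain ⟨i, hi⟩ := hVe x
      refine ⟨i, ?_⟩
      have : a x = 0 := max_eq_left (by linarith)
      simp only [hG, this, hφ2 i x hi, zero_mul, mul_zero, add_zero]
    · obtain ⟨i, hi⟩ := exists_mnc (F x)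
      have hxi : x ∉ V' i := by
        intro hxi
        rcases hVU i hxi with h1 | h1
        · exact hx h1
        · rw [hi, sub_self] at h1; exact lt_irrefl _ h1
      exact ⟨i, by simp only [hG, hi, hφ2 i x hxi, sub_self, mul_zero, add_zero]⟩
  have hGm : ∀ x, 1 / 4 ≤ mxc (G x) := by
    intro x
    by_cases hx : o x ≤ 3 / 4
    · obtain ⟨i, hi⟩ := hVL x
      refine le_trans ?_ (le_mxc (G x) i)
      have h1 := mul_nonneg (ha01 x).1 (hF' x i).1
      simp only [hG, hφ3 i x hi]
      linarith
    · obtain ⟨i, hi⟩ := exists_mxc (F x)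
      refine le_trans ?_ (le_mxc (G x) i)
      have h1 := mul_nonneg (hb01 x).1 (hφ1 i x).1
      have h2 : F x i - mnc (F x) = o x := by rw [hi]
      have h3 : 2 * o x - 1 ≤ a x := le_max_right _ _
      simp only [hG]
      rw [h2]
      nlinarith
  refine ⟨fun x => ⟨(mxc (G x))⁻¹ • G x, ?_, ?_, ?_⟩, ?_, ?_⟩
  · intro i
    have hpos : 0 < mxc (G x) := by linarith [hGm x]
    rw [Pi.smul_apply, smul_eq_mul, ← div_eq_inv_mul]
    exact ⟨div_nonneg (hG0 x i) hpos.le, (div_le_one hpos).2 (le_mxc _ i)⟩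
  · obtain ⟨i, hi⟩ := hGz x
    exact ⟨i, by simp [hi]⟩
  · obtain ⟨i, hi⟩ := exists_mxc (G x)
    have hpos : 0 < mxc (G x) := by linarith [hGm x]
    exact ⟨i, by rw [Pi.smul_apply, hi, smul_eq_mul, inv_mul_cancel₀ hpos.ne']⟩
  · intro x
    apply Subtype.ext
    have hK := (f x).2
    have e1 : mxc (f x).1 = 1 := mxc_eq (fun i => (hK.1 i).2) hK.2.2
    have e2 : mnc (f x).1 = 0 := mnc_eq (fun i => (hK.1 i).1) hK.2.1
    have e3 : o x = 1 := by simp only [ho, hFA, e1, e2, sub_zero]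
    have e4 : a x = 1 := by simp only [ha, e3]; norm_num
    have e5 : G x = (f x).1 := by
      ext i
      simp only [hG, e3, e4, hFA, e2]; ring
    simp only [e5, e1, inv_one, one_smul]
  · intro x y
    rw [Subtype.dist_eq, dist_eq_norm]
    have hD : 0 ≤ (8 + 8 / t) * (lam * dist x y) := by positivity
    have h1 : ‖G x - G y‖ ≤ (8 + 8 / t) * (lam * dist x y) := by
      rw [pi_norm_le_iff_of_nonneg hD]
      exact fun i => hGl x y i
    have h2 : ‖G y‖ ≤ 2 := by
      rw [pi_norm_le_iff_of_nonneg zero_le_two]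
      intro i
      rw [Real.norm_eq_abs, abs_of_nonneg (hG0 y i)]
      exact hG2 y i
    refine (div_lip (by norm_num) (hGm x) (hGm y) h2 h1 (mxc_lip (hGl x y))).trans
      (le_of_eq ?_)
    ring

theorem sphere_small_scale_extensor_iff_cover_refinement
    {X : Type*} [MetricSpace X] (m : ℕ) :
    SmallScaleLipschitzExtensorOf X (Metric.sphere (0 : EuclideanSpace ℝ (Fin (m + 1))) 1) ↔
      ∃ t : ℝ, 0 < t ∧ ∃ M : ℝ, 0 < M ∧ ∀ r : ℝ, 0 < r → r < M →
        ∀ U : Fin (m + 2) → Set X, (∀ x : X, ∃ i, Metric.ball x r ⊆ U i) →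
          ∃ V : Set (Set X),
            (∀ W ∈ V, ∃ i, W ⊆ U i) ∧
            MultiplicityLE V (m + 1) ∧
            (∀ x : X, ∃ W ∈ V, Metric.ball x (t * r) ⊆ W) := by
  rw [sphere_iff_K]
  exact ⟨forward m, backward m⟩
end
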